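/- arXiv:2206.11052 — 6 statements merged into one kernel-verified Lean document; each statement's English description precedes it below -/
import Mathlib

section
/- If (G,σ) is a balanced signed multigraph, then χ'(G,σ) ≤ Δ(G)+1. -/
/-!
The coloring uses an even palette, `S^0_{2k}` with `k = ⌈Δ/2⌉`, so that `2k ≤ Δ + 1`.

*Potentials.*  A balanced signature has the form `σ(vw) = p(v) p(w)` for some `p : V → {±1}`
(`exists_isPotential_of_isBalanced`).  Otherwise let `S` be an inclusion-minimal edge set on which
no potential exists.  Flipping a potential of `S \ {e}` at a vertex of degree one shows that all
degrees in `S` are at least two; gluing potentials along components shows that `S` is connected.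
For `e ≠ f` in `S`, the product of potentials of `S \ {e}` and `S \ {f}` is a `±1`-function on
the vertices that changes along exactly the edges `e` and `f`; such functions produce an injection
from sign vectors on `S` to sign vectors on the vertices covered by `S`, whence `S` has at most as
many edges as vertices.  So all degrees are two, `S` is a circuit, and multiplying
a potential of `S \ {e}` along `S` shows that this circuit is negative, a contradiction.

*Coloring.*  The bidirection `τ(h) = ± p(v)`, with opposite signs on the two half-edges of an
edge, induces `σ`.  The factor `p(v)` is common to all half-edges at `v`, so it remains to assign
values to half-edges, opposite on the two halves of an edge and distinct at every vertex
(`exists_partialColoring`).  The edges are colored one at a time.  For a new edge `uw` there are a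
value `a` missing at `u` and a value `b` missing at `w`; if `-a` occurs at `w`, then exchanging
`-a ↔ b` and `a ↔ -b` along the Kempe chain that leaves `w` through the half-edge valued `-a`
makes `-a` missing at `w` while `a` stays missing at `u` (`exists_matching_missing`).
-/

/-- A multigraph on vertex type `V` with edge type `E`.  Each edge `e` has two
half-edges, indexed by `Bool`; `ends e b` is the vertex incident to the
half-edge `(e, b)`.  Loops (`ends e true = ends e false`) and parallel edges
are allowed. -/
structure Multigraph (V E : Type*) where
  ends : E → Bool → V

/-- The symmetric set `S^t_{2k}`: `t` self-inverse colors `0_1, …, 0_t`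
(the elements `Sum.inl i`) and `k` pairs `±s_1, …, ±s_k` of non-self-inverse
colors (the elements `Sum.inr (i, b)`). -/
abbrev SymColor (t k : ℕ) := Fin t ⊕ (Fin k × Bool)

/-- Negation on a symmetric set: self-inverse elements are fixed,
and `s_i = Sum.inr (i, true)` is interchanged with `-s_i = Sum.inr (i, false)`. -/
def symNeg {t k : ℕ} : SymColor t k → SymColor t k
  | Sum.inl a => Sum.inl a
  | Sum.inr (i, b) => Sum.inr (i, !b)

/-- The signature induced by a bidirection `τ`: `σ(e) = -(τ(h_e(v))·τ(h_e(w)))`. -/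
def signOf {E : Type*} (τ : E → Bool → ℤˣ) (e : E) : ℤˣ :=
  -(τ e true * τ e false)

/-- The value `τ(h_e(v))·c(e)` of the half-edge `(e, b)` under a coloring `c`
with respect to the bidirection `τ`. -/
def hval {E : Type*} {t k : ℕ} (τ : E → Bool → ℤˣ) (c : E → SymColor t k)
    (e : E) (b : Bool) : SymColor t k :=
  if τ e b = 1 then c e else symNeg (c e)

namespace Multigraph

variable {V E : Type*} [Fintype V] [Fintype E] [DecidableEq V] [DecidableEq E]

/-- The degree of a vertex: the number of half-edges incident to it
(a loop contributes `2`). -/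
def degree (G : Multigraph V E) (v : V) : ℕ :=
  (Finset.univ.filter fun h : E × Bool => G.ends h.1 h.2 = v).card

/-- The maximum degree `Δ(G)`. -/
def maxDegree (G : Multigraph V E) : ℕ :=
  Finset.univ.sup fun v => G.degree v

/-- The degree of a vertex in the spanning subgraph with edge set `S`. -/
def degOn (G : Multigraph V E) (S : Finset E) (v : V) : ℕ :=
  (Finset.univ.filter fun h : E × Bool => h.1 ∈ S ∧ G.ends h.1 h.2 = v).card

/-- `v` is incident with an edge of `S`. -/
def IncidentOn (G : Multigraph V E) (S : Finset E) (v : V) : Prop :=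
  ∃ e ∈ S, ∃ b, G.ends e b = v

/-- Two vertices joined by an edge of `S`. -/
def AdjOn (G : Multigraph V E) (S : Finset E) (u w : V) : Prop :=
  ∃ e ∈ S, (G.ends e true = u ∧ G.ends e false = w) ∨
    (G.ends e true = w ∧ G.ends e false = u)

/-- The edge set `S` forms a circuit: it is nonempty, the subgraph it induces
is `2`-regular, and it is connected. -/
def IsCircuit (G : Multigraph V E) (S : Finset E) : Prop :=
  S.Nonempty ∧ (∀ v, G.IncidentOn S v → G.degOn S v = 2) ∧
    ∀ u w, G.IncidentOn S u → G.IncidentOn S w →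
      Relation.ReflTransGen (G.AdjOn S) u w

/-- A signed multigraph `(G, σ)` is balanced if every circuit is positive. -/
def IsBalanced (G : Multigraph V E) (σ : E → ℤˣ) : Prop :=
  ∀ S : Finset E, G.IsCircuit S → ∏ e ∈ S, σ e = 1

/-- Resigning a signature at a vertex `v`: every non-loop edge incident with
`v` changes its sign; loops at `v` and edges not incident with `v` are
unchanged. -/
def resign (G : Multigraph V E) (σ : E → ℤˣ) (v : V) : E → ℤˣ := fun e =>
  (if G.ends e true = v then -1 else 1) * σ e *
    (if G.ends e false = v then -1 else 1)

/-- Two signatures are equivalent if one is obtained from the other by a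
(finite) sequence of resignings at vertices. -/
def Equivalent (G : Multigraph V E) (σ₁ σ₂ : E → ℤˣ) : Prop :=
  Relation.ReflTransGen (fun σ σ' => ∃ v, σ' = G.resign σ v) σ₁ σ₂

/-- `c` is an `S^t_{2k}`-coloring of `(G, σ)` with bidirection `τ` (where
`σ = signOf τ`): any two distinct half-edges incident with the same vertex
receive distinct values `τ(h)·c(e)`. -/
def IsProperColoring (G : Multigraph V E) (τ : E → Bool → ℤˣ) {t k : ℕ}
    (c : E → SymColor t k) : Prop :=
  ∀ e₁ b₁ e₂ b₂, ((e₁, b₁) : E × Bool) ≠ (e₂, b₂) →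
    G.ends e₁ b₁ = G.ends e₂ b₂ → hval τ c e₁ b₁ ≠ hval τ c e₂ b₂

/-- `(G, σ)` admits an `S^t_{2k}`-coloring (with respect to some bidirection
inducing `σ`). -/
def HasColoring (G : Multigraph V E) (σ : E → ℤˣ) (t k : ℕ) : Prop :=
  ∃ τ : E → Bool → ℤˣ, (∀ e, σ e = signOf τ e) ∧
    ∃ c : E → SymColor t k, G.IsProperColoring τ c

/-- `χ'_i(G, σ)`: the minimum `2k + i` such that `(G, σ)` admits an
`S^i_{2k}`-coloring. -/
noncomputable def chiSub (G : Multigraph V E) (σ : E → ℤˣ) (i : ℕ) : ℕ :=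
  sInf {n : ℕ | ∃ k, n = 2 * k + i ∧ G.HasColoring σ i k}

/-- The chromatic index `χ'(G, σ) = min{χ'_0(G, σ), χ'_1(G, σ)}`. -/
noncomputable def chromaticIndex (G : Multigraph V E) (σ : E → ℤˣ) : ℕ :=
  min (G.chiSub σ 0) (G.chiSub σ 1)

/-- A matching: a set of pairwise non-adjacent non-loop edges. -/
def IsMatching (G : Multigraph V E) (M : Finset E) : Prop :=
  (∀ e ∈ M, G.ends e true ≠ G.ends e false) ∧
    ∀ e₁ ∈ M, ∀ e₂ ∈ M, e₁ ≠ e₂ → ∀ b₁ b₂, G.ends e₁ b₁ ≠ G.ends e₂ b₂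

end Multigraph

namespace Multigraph

/-! ### Kempe chains -/

section Kempe

variable {V E C : Type*}

/-- An assignment `f` of values to half-edges, with opposite values on the two halves of every
edge, that is injective on the half-edges of `S` at each vertex.  Its values off `S` only have to
satisfy the sign condition. -/
def PartialColoring (G : Multigraph V E) (neg : C → C) (S : Finset E) (f : E × Bool → C) : Prop :=
  (∀ e b, f (e, !b) = neg (f (e, b))) ∧
    ∀ h h' : E × Bool, h.1 ∈ S → h'.1 ∈ S → G.ends h.1 h.2 = G.ends h'.1 h'.2 → f h = f h' → h = h'

/-- The value `x` occurs on no half-edge of `S` at `v`. -/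
def Misses (G : Multigraph V E) (S : Finset E) (f : E × Bool → C) (v : V) (x : C) : Prop :=
  ∀ h : E × Bool, h.1 ∈ S → G.ends h.1 h.2 = v → f h ≠ x

/-- The exchange of values `-a ↔ b` and `a ↔ -b`.  For `a = b` it is the single
transposition of `a` and `-a`. -/
def exchange [DecidableEq C] (neg : C → C) (a b x : C) : C :=
  if x = neg a then b else if x = b then neg a else if x = a then neg b
  else if x = neg b then a else x

/-- The half-edges through which the Kempe chain starting at `h₀` leaves its successive
vertices: the chain runs from `h` to the other half of the same edge, and continues with the
half-edge at that vertex which carries the exchanged value. -/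
inductive Chain (G : Multigraph V E) (S : Finset E) (f : E × Bool → C) (π : C → C)
    (h₀ : E × Bool) : E × Bool → Prop
  | base : Chain G S f π h₀ h₀
  | step (g h : E × Bool) : Chain G S f π h₀ g → h.1 ∈ S →
      G.ends h.1 h.2 = G.ends g.1 (!g.2) → f h = π (f (g.1, !g.2)) → Chain G S f π h₀ h

theorem exists_matching_missing [DecidableEq C] (G : Multigraph V E) (neg : C → C)
    (hinv : ∀ x, neg (neg x) = x) (hfix : ∀ x, neg x ≠ x) (S : Finset E) (f : E × Bool → C)
    (hf : PartialColoring G neg S f) (u w : V) (a b : C) (ha : Misses G S f u a)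
    (hb : Misses G S f w b) (hne : u ≠ w ∨ a ≠ b) :
    ∃ f' x, PartialColoring G neg S f' ∧ Misses G S f' u x ∧ Misses G S f' w (neg x) := by
  classical
  by_cases hw : Misses G S f w (neg a)
  · exact ⟨f, a, hf, ha, hw⟩
  have hab : b ≠ neg a := by
    rintro rfl
    exact hw hb
  obtain ⟨h₀, h₀S, h₀w, h₀a⟩ :
      ∃ h : E × Bool, h.1 ∈ S ∧ G.ends h.1 h.2 = w ∧ f h = neg a := by
    by_contra hno
    exact hw fun h hS hv hval => hno ⟨h, hS, hv, hval⟩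
  obtain ⟨hopp, hinj⟩ := hf
  set π := exchange neg a b with hπ
  have ninj : ∀ x y, neg x = neg y → x = y := fun x y h => by rw [← hinv x, h, hinv]
  have π1 : π (neg a) = b := by simp [hπ, exchange]
  have π2 : π b = neg a := by simp [hπ, exchange, hab]
  have π3 : π a = neg b := by
    simp only [hπ, exchange]
    grind
  have π4 : π (neg b) = a := by
    simp only [hπ, exchange]
    grind
  have π5 : ∀ x, x ≠ a → x ≠ b → x ≠ neg a → x ≠ neg b → π x = x := by
    intro x h1 h2 h3 h4
    simp [hπ, exchange, h1, h2, h3, h4]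
  have ππ : ∀ x, π (π x) = x := by
    intro x
    by_cases h1 : x = a <;> by_cases h2 : x = b <;> by_cases h3 : x = neg a <;>
      by_cases h4 : x = neg b <;> grind
  have πneg : ∀ x, π (neg x) = neg (π x) := by
    intro x
    by_cases h1 : x = a <;> by_cases h2 : x = b <;> by_cases h3 : x = neg a <;>
      by_cases h4 : x = neg b <;> grind
  set D := Chain G S f π h₀ with hD
  have DS : ∀ h, D h → h.1 ∈ S := by
    intro h hh
    cases hh with
    | base => exact h₀S
    | step g h _ hS => exact hS
  have Dval : ∀ h, D h → f h = neg a ∨ f h = neg b := by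
    intro h hh
    induction hh with
    | base => exact Or.inl h₀a
    | step g h _ _ _ hv ih =>
      rw [hv, hopp, πneg]
      rcases ih with ih | ih
      · right
        rw [show f (g.1, g.2) = neg a from ih, π1]
      · left
        rw [show f (g.1, g.2) = neg b from ih, π4]
  -- The edges of the chain; both halves of each edge belong to `K`.
  let K : E × Bool → Prop := fun h => D h ∨ D (h.1, !h.2)
  have KS : ∀ h, K h → h.1 ∈ S := by
    rintro h (h1 | h1)
    · exact DS _ h1
    · exact DS (h.1, !h.2) h1
  have Kopp : ∀ e b, K (e, !b) ↔ K (e, b) := by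
    intro e b
    simp only [K, Bool.not_not]
    exact or_comm
  have Kclosed : ∀ h h', K h → h'.1 ∈ S → G.ends h'.1 h'.2 = G.ends h.1 h.2 →
      f h' = π (f h) → K h' := by
    rintro h h' (h1 | h1) hS hv hval
    · cases h1 with
      | base =>
        -- The value exchanged with that of `h₀` is `b`, which is missing at `w`.
        exact absurd (by rw [hval, h₀a, π1]) (hb h' hS (hv.trans h₀w))
      | step g h hg hS' hv' hval' =>
        have : h' = (g.1, !g.2) := by
          refine hinj _ _ hS (DS g hg) (hv.trans hv') ?_
          rw [hval, hval', ππ]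
        right
        rw [this]
        simpa using hg
    · left
      refine Chain.step _ _ h1 hS ?_ ?_
      · simpa using hv
      · simpa using hval
  refine ⟨fun h => if K h then π (f h) else f h, a, ⟨?_, ?_⟩, ?_, ?_⟩
  · intro e b
    by_cases hk : K (e, b)
    · simp [hk, (Kopp e b).2 hk, hopp, πneg]
    · simp [hk, mt (Kopp e b).1 hk, hopp]
  · intro h h' hS hS' hv hval
    by_cases hk : K h <;> by_cases hk' : K h' <;> simp only [hk, hk', if_true, if_false] at hval
    · exact hinj _ _ hS hS' hv (by rw [← ππ (f h), hval, ππ])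
    · exact absurd (Kclosed h h' hk hS' hv.symm hval.symm) hk'
    · exact absurd (Kclosed h' h hk' hS hv hval) hk
    · exact hinj _ _ hS hS' hv hval
  · intro h hS hv
    by_cases hk : K h
    · simp only [hk, if_true]
      intro hval
      have hfb : f h = neg b := by rw [← ππ (f h), hval, π3]
      rcases hk with hk | hk
      -- A chain that leaves `u` with value `-b` has entered it with value `a`.
      · cases hk with
        | base =>
          rcases hne with hne | hne
          · exact hne (hv.symm.trans h₀w)
          · exact hne (ninj _ _ (h₀a.symm.trans hfb))
        | step g h hg hS' hv' hval' =>
          refine ha (g.1, !g.2) (DS g hg) (hv'.symm.trans hv) ?_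
          rw [← ππ (f _), ← hval', hfb, π4]
      · have := Dval _ hk
        rw [hopp, show f (h.1, h.2) = neg b from hfb, hinv] at this
        rcases this with h1 | h1
        · exact hab h1
        · exact hfix b h1.symm
    · simp only [hk, if_false]
      exact ha h hS hv
  · intro h hS hv
    by_cases hk : K h
    · simp only [hk, if_true]
      intro hval
      exact hb h hS hv (by rw [← ππ (f h), hval, π1])
    · simp only [hk, if_false]
      intro hval
      apply hk
      left
      rw [hinj h h₀ hS h₀S (hv.trans h₀w.symm) (hval.trans h₀a.symm)]
      exact Chain.base

end Kempe

/-! ### Coloring all edges -/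

section Coloring

variable {V E C : Type*} [Fintype E] [DecidableEq V] [DecidableEq E]

/-- The number of half-edges of `S` at `v` is too small to block a further value. -/
theorem exists_misses [Fintype C] [DecidableEq C] (G : Multigraph V E) (S : Finset E)
    (f : E × Bool → C) (v : V) (X : Finset C)
    (hcard : G.degOn S v + X.card < Fintype.card C) : ∃ x, x ∉ X ∧ Misses G S f v x := by
  have hlt : (((Finset.univ.filter fun h : E × Bool =>
      h.1 ∈ S ∧ G.ends h.1 h.2 = v).image f) ∪ X).card < (Finset.univ : Finset C).card := by
    refine lt_of_le_of_lt (Finset.card_union_le _ _) (lt_of_le_of_lt ?_ hcard)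
    exact Nat.add_le_add_right Finset.card_image_le _
  obtain ⟨x, -, hx⟩ := Finset.exists_mem_notMem_of_card_lt_card hlt
  simp only [Finset.mem_union, not_or] at hx
  refine ⟨x, hx.2, fun h hS hv hval => hx.1 ?_⟩
  exact Finset.mem_image.2 ⟨h, by simp [hS, hv], hval⟩

theorem exists_partialColoring [Fintype C] [DecidableEq C] (G : Multigraph V E) (neg : C → C)
    (hinv : ∀ x, neg (neg x) = x) (hfix : ∀ x, neg x ≠ x)
    (hdeg : ∀ v, G.degree v ≤ Fintype.card C) (S : Finset E) :
    ∃ f, PartialColoring G neg S f := by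
  have deg_lt : ∀ (S : Finset E) (T : Finset (E × Bool)) (v : V),
      (∀ h ∈ T, h.1 ∉ S ∧ G.ends h.1 h.2 = v) → G.degOn S v + T.card ≤ Fintype.card C := by
    intro S T v hT
    refine le_trans ?_ (hdeg v)
    unfold degOn degree
    rw [← Finset.card_union_of_disjoint]
    · apply Finset.card_le_card
      intro h hh
      rcases Finset.mem_union.1 hh with hh | hh
      · simp only [Finset.mem_filter] at hh ⊢
        exact ⟨hh.1, hh.2.2⟩
      · simpa using (hT h hh).2
    · rw [Finset.disjoint_left]
      intro h h1 h2
      exact (hT h h2).1 (Finset.mem_filter.1 h1).2.1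
  induction S using Finset.induction_on with
  | empty =>
    rcases isEmpty_or_nonempty C with hC | ⟨⟨x⟩⟩
    · have hE : IsEmpty E := by
        refine ⟨fun e => ?_⟩
        have h1 := deg_lt ∅ {(e, true)} (G.ends e true) (by simp)
        simp at h1
      exact ⟨fun h => hE.elim h.1, fun e => hE.elim e, by simp⟩
    · refine ⟨fun h => if h.2 then x else neg x, ?_, by simp⟩
      rintro e (_ | _) <;> simp [hinv]
  | insert e S he ih =>
    obtain ⟨f, hf⟩ := ih
    obtain ⟨a, -, ha⟩ := exists_misses G S f (G.ends e true) ∅ (by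
      have := deg_lt S {(e, true)} (G.ends e true) (by simp [he])
      simp only [Finset.card_singleton, Finset.card_empty] at this ⊢
      omega)
    -- A loop counts twice in the degree, so two distinct values are missing at its vertex.
    obtain ⟨b, hne, hb⟩ : ∃ b, (G.ends e true ≠ G.ends e false ∨ a ≠ b) ∧
        Misses G S f (G.ends e false) b := by
      by_cases hl : G.ends e true = G.ends e false
      · obtain ⟨b, hba, hb⟩ := exists_misses G S f (G.ends e false) {a} (by
          have := deg_lt S {(e, true), (e, false)} (G.ends e false) (by simp [he, hl])
          rw [Finset.card_pair (by simp)] at this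
          simp only [Finset.card_singleton]
          omega)
        exact ⟨b, Or.inr fun h => hba (by simp [h]), hb⟩
      · obtain ⟨b, -, hb⟩ := exists_misses G S f (G.ends e false) ∅ (by
          have := deg_lt S {(e, false)} (G.ends e false) (by simp [he])
          simp only [Finset.card_singleton, Finset.card_empty] at this ⊢
          omega)
        exact ⟨b, Or.inl hl, hb⟩
    obtain ⟨f', x, ⟨hopp, hinj⟩, hu, hw⟩ :=
      exists_matching_missing G neg hinv hfix S f hf _ _ a b ha hb hne
    refine ⟨fun h => if h.1 = e then (if h.2 then x else neg x) else f' h, ?_, ?_⟩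
    · intro e' b'
      by_cases h : e' = e
      · cases b' <;> simp [h, hinv]
      · simp [h, hopp]
    · have new_old : ∀ (c : Bool) (h : E × Bool), h.1 ∈ S → G.ends h.1 h.2 = G.ends e c →
          f' h ≠ if c then x else neg x := by
        rintro (_ | _) h hS hv
        · simpa using hw h hS hv
        · simpa using hu h hS hv
      rintro ⟨e₁, b₁⟩ ⟨e₂, b₂⟩ h₁ h₂ hv hval
      by_cases hh₁ : e₁ = e <;> by_cases hh₂ : e₂ = e
      · subst hh₁
        subst hh₂
        cases b₁ <;> cases b₂
        · rfl
        · exact absurd (by simpa using hval) (hfix x)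
        · exact absurd (by simpa using hval.symm) (hfix x)
        · rfl
      · subst hh₁
        simp only [hh₂, if_true, if_false] at hval
        exact absurd hval.symm
          (new_old b₁ (e₂, b₂) (Finset.mem_of_mem_insert_of_ne h₂ hh₂) hv.symm)
      · subst hh₂
        simp only [hh₁, if_true, if_false] at hval
        exact absurd hval
          (new_old b₂ (e₁, b₁) (Finset.mem_of_mem_insert_of_ne h₁ hh₁) hv)
      · simp only [hh₁, hh₂, if_false] at hval
        exact hinj _ _ (Finset.mem_of_mem_insert_of_ne h₁ hh₁)
          (Finset.mem_of_mem_insert_of_ne h₂ hh₂) hv hval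

end Coloring

/-! ### Potentials of balanced signatures -/

section Potential

variable {V E : Type*} [Fintype V] [Fintype E] [DecidableEq V] [DecidableEq E]

/-- On the edges of `S`, the signature is the product of the values of `p` at the two ends. -/
def IsPotential (G : Multigraph V E) (σ : E → ℤˣ) (S : Finset E) (p : V → ℤˣ) : Prop :=
  ∀ e ∈ S, σ e = p (G.ends e true) * p (G.ends e false)

/-- Double counting of half-edges, in a form that covers both sums and products. -/
theorem prod_pow_degOn {M : Type*} [CommMonoid M] (G : Multigraph V E) (S : Finset E)
    (p : V → M) :
    ∏ e ∈ S, (p (G.ends e true) * p (G.ends e false)) = ∏ v, p v ^ G.degOn S v := by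
  have h1 : ∏ e ∈ S, (p (G.ends e true) * p (G.ends e false)) =
      ∏ h ∈ S ×ˢ (Finset.univ : Finset Bool), p (G.ends h.1 h.2) := by
    rw [Finset.prod_product]
    simp
  rw [h1, ← Finset.prod_fiberwise_of_maps_to (t := Finset.univ)
    (g := fun h : E × Bool => G.ends h.1 h.2) (by simp)]
  refine Finset.prod_congr rfl fun v _ => ?_
  rw [Finset.prod_congr rfl (g := fun _ => p v) (by
    intro h hh
    rw [(Finset.mem_filter.1 hh).2]), Finset.prod_const]
  congr 2
  ext h
  simp

theorem sum_degOn (G : Multigraph V E) (S : Finset E) : ∑ v, G.degOn S v = 2 * S.card := by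
  have := prod_pow_degOn G S (fun _ => Multiplicative.ofAdd (1 : ℕ))
  rw [Finset.prod_const, Finset.prod_pow_eq_pow_sum] at this
  have := congrArg Multiplicative.toAdd this
  simp at this
  omega

omit [Fintype V] in
theorem degOn_pos_iff (G : Multigraph V E) (S : Finset E) (v : V) :
    0 < G.degOn S v ↔ G.IncidentOn S v := by
  unfold degOn IncidentOn
  rw [Finset.card_pos]
  constructor
  · rintro ⟨h, hh⟩
    simp only [Finset.mem_filter] at hh
    exact ⟨h.1, hh.2.1, h.2, hh.2.2⟩
  · rintro ⟨e, he, b, hb⟩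
    exact ⟨(e, b), by simp [he, hb]⟩

theorem units_eq_neg_of_ne {a b : ℤˣ} (h : a ≠ b) : a = -b := by
  rcases Int.units_eq_one_or a with rfl | rfl <;> rcases Int.units_eq_one_or b with rfl | rfl <;>
    simp_all

section Minimal

variable (G : Multigraph V E) (σ : E → ℤˣ) (S : Finset E) (hS : ¬ ∃ p, IsPotential G σ S p)
  (P : E → V → ℤˣ) (hP : ∀ e ∈ S, IsPotential G σ (S.erase e) (P e))
include hS hP

omit [Fintype V] [Fintype E] [DecidableEq V] in
/-- If `P e` is a potential of `S \ {e}` but `S` has none, then `P e` fails at `e`. -/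
theorem sign_eq_neg (e : E) (he : e ∈ S) :
    σ e = -(P e (G.ends e true) * P e (G.ends e false)) := by
  refine units_eq_neg_of_ne fun h => hS ⟨P e, fun x hx => ?_⟩
  by_cases hxe : x = e
  · rw [hxe, h]
  · exact hP e he x (Finset.mem_erase.2 ⟨hxe, hx⟩)

omit [Fintype V] in
/-- At a vertex of degree one, flipping the potential of `S \ {e}` would repair it at `e`. -/
theorem two_le_degOn (v : V) (hv : G.IncidentOn S v) : 2 ≤ G.degOn S v := by
  obtain ⟨e, he, b, hb⟩ := hv
  by_contra hlt
  have huniq : ∀ h : E × Bool, h.1 ∈ S → G.ends h.1 h.2 = v → h = (e, b) := by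
    intro h h1 h2
    refine Finset.card_le_one.1 (Nat.le_of_lt_succ (not_le.1 hlt)) h ?_ (e, b) ?_
    · simp [h1, h2]
    · simp [he, hb]
  refine hS ⟨fun x => if x = v then -P e x else P e x, fun x hx => ?_⟩
  by_cases hxe : x = e
  · subst hxe
    have hs := sign_eq_neg G σ S hS P hP x he
    have hother : G.ends x (!b) ≠ v := fun h => by
      have := huniq (x, !b) he h
      simp at this
    cases b <;> simp_all
  · have h1 : ∀ c, G.ends x c ≠ v := fun c h => hxe (congrArg Prod.fst (huniq (x, c) hx h))
    simp only [h1, if_false]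
    exact hP e he x (Finset.mem_erase.2 ⟨hxe, hx⟩)

omit [Fintype V] [Fintype E] [DecidableEq V] in
/-- Potentials of two proper subsets of `S` glue along the component of `u`, so no edge of `S`
lies outside it. -/
theorem connected_of_minimal (u w : V) (hu : G.IncidentOn S u) (hw : G.IncidentOn S w) :
    Relation.ReflTransGen (G.AdjOn S) u w := by
  classical
  by_contra hcon
  obtain ⟨e, he, b, hb⟩ := hu
  obtain ⟨f, hf, c, hc⟩ := hw
  have key : ∀ x ∈ S, ∀ d, Relation.ReflTransGen (G.AdjOn S) u (G.ends x d) →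
      ∀ d', Relation.ReflTransGen (G.AdjOn S) u (G.ends x d') := by
    intro x hx d hd d'
    by_cases hdd : d = d'
    · rwa [← hdd]
    · refine hd.tail ⟨x, hx, ?_⟩
      cases d <;> cases d' <;> simp_all
  have hfu : ∀ d, ¬ Relation.ReflTransGen (G.AdjOn S) u (G.ends f d) := fun d hd =>
    hcon (hc ▸ key f hf d hd c)
  have heu : ∀ d, Relation.ReflTransGen (G.AdjOn S) u (G.ends e d) :=
    key e he b (hb ▸ Relation.ReflTransGen.refl)
  refine hS ⟨fun x => if Relation.ReflTransGen (G.AdjOn S) u x then P f x else P e x,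
    fun x hx => ?_⟩
  by_cases hr : Relation.ReflTransGen (G.AdjOn S) u (G.ends x true)
  · have hr' := key x hx true hr false
    simp only [hr, hr', if_true]
    refine hP f hf x (Finset.mem_erase.2 ⟨?_, hx⟩)
    rintro rfl
    exact hfu _ hr
  · have hr' : ¬ Relation.ReflTransGen (G.AdjOn S) u (G.ends x false) :=
      fun h => hr (key x hx false h true)
    simp only [hr, hr', if_false]
    refine hP e he x (Finset.mem_erase.2 ⟨?_, hx⟩)
    rintro rfl
    exact hr (heu _)

/-- `S` has at most as many edges as it covers vertices: every sign vector `s` on `S` is recovered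
from a sign vector `g` on the vertices whose differences along the edges other than
`e₀` are prescribed by `s`, and whose value at a fixed end of `e₀` is `s e₀`. -/
theorem card_le_card_incident :
    S.card ≤ (Finset.univ.filter fun v => 0 < G.degOn S v).card := by
  classical
  rcases S.eq_empty_or_nonempty with rfl | ⟨e₀, he₀⟩
  · simp
  set W := Finset.univ.filter fun v => 0 < G.degOn S v with hW
  have memW : ∀ e ∈ S, ∀ b, G.ends e b ∈ W := fun e he b => by
    simp only [hW, Finset.mem_filter, Finset.mem_univ, true_and]
    exact (degOn_pos_iff G S _).2 ⟨e, he, b, rfl⟩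
  -- `P x * P e₀` changes along `x` and along no other edge of `S \ {e₀}`.
  have hq : ∀ x ∈ S, x ≠ e₀ → ∀ y ∈ S, y ≠ e₀ →
      (P x (G.ends y true) * P e₀ (G.ends y true)) *
        (P x (G.ends y false) * P e₀ (G.ends y false)) = if x = y then -1 else 1 := by
    intro x hx hx0 y hy hy0
    have h0 := hP e₀ he₀ y (Finset.mem_erase.2 ⟨hy0, hy⟩)
    rw [mul_mul_mul_comm, ← h0]
    split_ifs with hxy
    · subst hxy
      have h1 := sign_eq_neg G σ S hS P hP x hx
      rw [← neg_eq_iff_eq_neg] at h1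
      rw [← h1, neg_mul, Int.units_mul_self]
    · have h1 := hP x hx y (Finset.mem_erase.2 ⟨fun h => hxy h.symm, hy⟩)
      rw [← h1, Int.units_mul_self]
  have hg : ∀ s : E → ℤˣ, ∃ g : V → ℤˣ, g (G.ends e₀ true) = s e₀ ∧
      ∀ y ∈ S, y ≠ e₀ → g (G.ends y true) * g (G.ends y false) = s y := by
    intro s
    let q : V → ℤˣ := fun v =>
      ∏ x ∈ (S.erase e₀).filter (fun x => s x = -1), (P x v * P e₀ v)
    refine ⟨fun v => (s e₀ * q (G.ends e₀ true)) * q v, ?_, ?_⟩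
    · simp only [mul_assoc, Int.units_mul_self, mul_one]
    · intro y hy hy0
      rw [mul_mul_mul_comm, Int.units_mul_self, one_mul]
      simp only [q]
      rw [← Finset.prod_mul_distrib, Finset.prod_congr rfl
        (g := fun x => if x = y then (-1 : ℤˣ) else 1)]
      · rw [Finset.prod_ite_eq']
        rcases Int.units_eq_one_or (s y) with h | h <;> simp [h, hy, hy0]
      · intro x hx
        simp only [Finset.mem_filter, Finset.mem_erase] at hx
        exact hq x hx.1.2 hx.1.1 y hy hy0
  choose g hg0 hg1 using hg
  let ext : (S → ℤˣ) → E → ℤˣ := fun s e => if h : e ∈ S then s ⟨e, h⟩ else 1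
  have hext : ∀ (s : S → ℤˣ) (e : S), ext s e = s e := fun s e => by simp [ext]
  have hcard := Fintype.card_le_of_injective
    (fun (s : S → ℤˣ) (v : W) => g (ext s) v) (by
      intro s t hst
      have hv : ∀ v ∈ W, g (ext s) v = g (ext t) v := fun v hv => congrFun hst ⟨v, hv⟩
      funext e
      rw [← hext s e, ← hext t e]
      by_cases h : (e : E) = e₀
      · rw [h, ← hg0 (ext s), ← hg0 (ext t)]
        exact hv _ (memW _ he₀ _)
      · rw [← hg1 (ext s) e e.2 h, ← hg1 (ext t) e e.2 h, hv _ (memW _ e.2 _),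
          hv _ (memW _ e.2 _)])
  simp only [Fintype.card_fun, Fintype.card_coe] at hcard
  exact (Nat.pow_le_pow_iff_right (by simp)).1 hcard

theorem degOn_eq_two (v : V) (hv : G.IncidentOn S v) : G.degOn S v = 2 := by
  set W := Finset.univ.filter fun v => 0 < G.degOn S v with hW
  have hle : ∀ v ∈ W, 2 ≤ G.degOn S v := fun v hv =>
    two_le_degOn G σ S hS P hP v ((degOn_pos_iff G S v).1 (Finset.mem_filter.1 hv).2)
  have hsum : ∑ v ∈ W, G.degOn S v = 2 * S.card := by
    rw [← sum_degOn G S]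
    refine Finset.sum_subset (Finset.subset_univ _) fun x _ hx => ?_
    simpa [hW] using hx
  have hcard := card_le_card_incident G σ S hS P hP
  have h2 : ∑ v ∈ W, 2 = ∑ v ∈ W, G.degOn S v := by
    refine le_antisymm (Finset.sum_le_sum hle) ?_
    rw [hsum, Finset.sum_const, smul_eq_mul, mul_comm]
    exact Nat.mul_le_mul_right 2 hcard
  exact ((Finset.sum_eq_sum_iff_of_le hle).1 h2 v
    (by simpa [hW] using (degOn_pos_iff G S v).2 hv)).symm

theorem prod_sign_eq_neg_one (hne : S.Nonempty) : ∏ e ∈ S, σ e = -1 := by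
  obtain ⟨e, he⟩ := hne
  have h1 : ∏ x ∈ S, (P e (G.ends x true) * P e (G.ends x false)) = 1 := by
    rw [prod_pow_degOn]
    refine Finset.prod_eq_one fun v _ => ?_
    rcases Nat.eq_zero_or_pos (G.degOn S v) with h | h
    · rw [h, pow_zero]
    · rw [degOn_eq_two G σ S hS P hP v ((degOn_pos_iff G S v).1 h), Int.units_sq]
  rw [← Finset.mul_prod_erase _ _ he] at h1 ⊢
  rw [sign_eq_neg G σ S hS P hP e he, Finset.prod_congr rfl (hP e he), neg_mul, h1]

end Minimal

theorem exists_isPotential_of_isBalanced (G : Multigraph V E) (σ : E → ℤˣ)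
    (hbal : G.IsBalanced σ) (S : Finset E) : ∃ p, IsPotential G σ S p := by
  induction S using Finset.strongInduction with
  | H S ih =>
    by_contra hS
    have hP : ∀ e, ∃ p, e ∈ S → IsPotential G σ (S.erase e) p := by
      intro e
      by_cases he : e ∈ S
      · obtain ⟨p, hp⟩ := ih _ (Finset.erase_ssubset he)
        exact ⟨p, fun _ => hp⟩
      · exact ⟨1, fun h => absurd h he⟩
    choose P hP using hP
    have hne : S.Nonempty := by
      rw [Finset.nonempty_iff_ne_empty]
      rintro rfl
      exact hS ⟨1, by simp [IsPotential]⟩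
    have hpos := hbal S ⟨hne, degOn_eq_two G σ S hS P hP, connected_of_minimal G σ S hS P hP⟩
    rw [prod_sign_eq_neg_one G σ S hS P hP hne] at hpos
    exact absurd hpos (by decide)

end Potential

end Multigraph

/-! ### The bound -/

theorem symNeg_symNeg {t k : ℕ} (x : SymColor t k) : symNeg (symNeg x) = x := by
  rcases x with x | ⟨i, b⟩ <;> simp [symNeg]

theorem symNeg_ne_self {k : ℕ} (x : SymColor 0 k) : symNeg x ≠ x := by
  rcases x with x | ⟨i, b⟩
  · exact x.elim0
  · simp [symNeg]

/-- **König-type bound.**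
If `(G, σ)` is a balanced signed multigraph, then `χ'(G, σ) ≤ Δ(G) + 1`. -/
theorem chromaticIndex_le_maxDegree_add_one_of_balanced
    {V E : Type*} [Fintype V] [Fintype E] [DecidableEq V] [DecidableEq E]
    (G : Multigraph V E) (σ : E → ℤˣ) (hbal : G.IsBalanced σ) :
    G.chromaticIndex σ ≤ G.maxDegree + 1 := by
  obtain ⟨p, hp⟩ := G.exists_isPotential_of_isBalanced σ hbal Finset.univ
  have hdeg : ∀ v, G.degree v ≤ Fintype.card (SymColor 0 ((G.maxDegree + 1) / 2)) := by
    intro v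
    have : G.degree v ≤ G.maxDegree := Finset.le_sup (f := G.degree) (Finset.mem_univ v)
    simp only [Fintype.card_sum, Fintype.card_fin, Fintype.card_prod, Fintype.card_bool]
    omega
  obtain ⟨f, hopp, hinj⟩ := G.exists_partialColoring symNeg symNeg_symNeg symNeg_ne_self hdeg
    Finset.univ
  have hcol : G.HasColoring σ 0 ((G.maxDegree + 1) / 2) := by
    refine ⟨fun e b => p (G.ends e b) * (if b then 1 else -1), fun e => ?_,
      fun e => f (e, true), ?_⟩
    · simp [signOf, hp e (Finset.mem_univ e)]
    -- The values at `v` are those of `f`, all negated if `p v = -1`.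
    · have hvals : ∀ e b, hval (fun e b => p (G.ends e b) * (if b then 1 else -1))
          (fun e => f (e, true)) e b =
            if p (G.ends e b) = 1 then f (e, b) else symNeg (f (e, b)) := by
        intro e b
        have h2 := hopp e true
        simp only [Bool.not_true] at h2
        cases b
        · rcases Int.units_eq_one_or (p (G.ends e false)) with h | h <;>
            simp [hval, h, h2, symNeg_symNeg]
        · rcases Int.units_eq_one_or (p (G.ends e true)) with h | h <;> simp [hval, h]
      intro e₁ b₁ e₂ b₂ hne hv heq
      rw [hvals, hvals, hv] at heq
      refine hne (hinj _ _ (Finset.mem_univ _) (Finset.mem_univ _) hv ?_)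
      split_ifs at heq
      · exact heq
      · rw [← symNeg_symNeg (f (e₁, b₁)), heq, symNeg_symNeg]
  calc G.chromaticIndex σ ≤ G.chiSub σ 0 := min_le_left _ _
    _ ≤ 2 * ((G.maxDegree + 1) / 2) := Nat.sInf_le ⟨_, rfl, hcol⟩
    _ ≤ G.maxDegree + 1 := by omega
end

section
/- Let (G,σ) be a balanced signed multigraph. Then χ'(G,σ) = Δ(G) if and only if G has a (possibly empty) matching M such that Δ(G−M) is even. -/
namespace Multigraph

/-! ### Degrees -/

theorem degOn_eq_sum {V E : Type*} [Fintype E] [DecidableEq V] [DecidableEq E]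
    (G : Multigraph V E) (S : Finset E) (v : V) :
    G.degOn S v = ∑ e ∈ S, ((if G.ends e true = v then 1 else 0) +
      (if G.ends e false = v then 1 else 0)) := by
  unfold degOn
  rw [Finset.card_filter, Fintype.sum_prod_type, ← Finset.sum_filter_add_sum_filter_not
    Finset.univ (· ∈ S)]
  rw [Finset.sum_eq_zero (s := Finset.univ.filter (· ∉ S))]
  · rw [add_zero]
    refine Finset.sum_congr (by ext; simp) ?_
    intro e he
    simp only [he, true_and, Fintype.sum_bool]
  · intro e he
    simp at he
    simp [he]

theorem degree_eq_degOn {V E : Type*} [Fintype E] [DecidableEq V] [DecidableEq E]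
    (G : Multigraph V E) (v : V) : G.degree v = G.degOn Finset.univ v := by
  simp [degree, degOn]

/-! ### Potentials of balanced signatures -/

/-- `G.PathOn T u w P X`: there is a path (without repeated vertices) from `u` to `w` with edge
set `P ⊆ T` and vertex set `X`. -/
inductive PathOn {V E : Type*} [DecidableEq V] [DecidableEq E] (G : Multigraph V E)
    (T : Finset E) (w : V) : V → Finset E → Finset V → Prop
  | nil : PathOn G T w w ∅ {w}
  | cons {u a : V} {P : Finset E} {X : Finset V} (e : E) (b : Bool) (he : e ∈ T)
      (ha : G.ends e b = a) (hu : G.ends e (!b) = u) (hX : a ∉ X) (h : PathOn G T w u P X) :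
      PathOn G T w a (insert e P) (insert a X)

section Path

variable {V E : Type*} {G : Multigraph V E} {T P : Finset E} {X : Finset V} {u w a : V}

theorem AdjOn.symm (h : G.AdjOn T u w) : G.AdjOn T w u := by
  obtain ⟨e, he, h⟩ := h
  exact ⟨e, he, h.symm⟩

theorem adjOn_iff : G.AdjOn T u w ↔ ∃ e ∈ T, ∃ b, G.ends e b = u ∧ G.ends e (!b) = w := by
  constructor
  · rintro ⟨e, he, ⟨h1, h2⟩ | ⟨h1, h2⟩⟩
    · exact ⟨e, he, true, h1, h2⟩
    · exact ⟨e, he, false, h2, h1⟩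
  · rintro ⟨e, he, b, h1, h2⟩
    refine ⟨e, he, ?_⟩
    cases b
    · exact Or.inr ⟨h2, h1⟩
    · exact Or.inl ⟨h1, h2⟩

theorem reachOn_symm (h : Relation.ReflTransGen (G.AdjOn T) u w) :
    Relation.ReflTransGen (G.AdjOn T) w u := by
  induction h with
  | refl => exact .refl
  | tail _ h ih => exact .head h.symm ih

theorem reachOn_mono {T' : Finset E} (hT : T ⊆ T') (h : Relation.ReflTransGen (G.AdjOn T) u w) :
    Relation.ReflTransGen (G.AdjOn T') u w := by
  refine Relation.ReflTransGen.mono ?_ _ _ h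
  rintro _ _ ⟨e, he, h⟩
  exact ⟨e, hT he, h⟩

variable [DecidableEq V] [DecidableEq E]

namespace PathOn

theorem subset (h : G.PathOn T w u P X) : P ⊆ T := by
  induction h with
  | nil => simp
  | cons e b he _ _ _ _ ih => exact Finset.insert_subset he ih

theorem shortcut (h : G.PathOn T w u P X) (ha : a ∈ X) : ∃ P' X', G.PathOn T w a P' X' := by
  induction h with
  | nil =>
    rw [Finset.mem_singleton.1 ha]
    exact ⟨_, _, .nil⟩
  | cons e b he h1 h2 hX h ih =>
    rcases Finset.mem_insert.1 ha with rfl | ha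
    · exact ⟨_, _, .cons e b he h1 h2 hX h⟩
    · exact ih ha

theorem of_reach (h : Relation.ReflTransGen (G.AdjOn T) u w) :
    ∃ P X, G.PathOn T w u P X := by
  induction h using Relation.ReflTransGen.head_induction_on with
  | refl => exact ⟨_, _, .nil⟩
  | @head a c h _ ih =>
    obtain ⟨P, X, hP⟩ := ih
    obtain ⟨e, he, b, h1, h2⟩ := adjOn_iff.1 h
    by_cases ha : a ∈ X
    · exact hP.shortcut ha
    · exact ⟨_, _, .cons e b he h1 h2 ha hP⟩

theorem reach (h : G.PathOn T w u P X) (ha : a ∈ X) :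
    Relation.ReflTransGen (G.AdjOn P) a w := by
  have start : ∀ {u P X}, G.PathOn T w u P X → u ∈ X := by
    intro u P X h
    cases h <;> simp
  induction h generalizing a with
  | nil =>
    rw [Finset.mem_singleton.1 ha]
  | cons e b he h1 h2 hX h ih =>
    rcases Finset.mem_insert.1 ha with rfl | ha
    · refine .head (adjOn_iff.2 ⟨e, Finset.mem_insert_self _ _, b, h1, h2⟩) ?_
      exact reachOn_mono (Finset.subset_insert _ _) (ih (start h))
    · exact reachOn_mono (Finset.subset_insert _ _) (ih ha)

theorem ends_mem (h : G.PathOn T w u P X) {e : E} (he : e ∈ P) (b : Bool) : G.ends e b ∈ X := by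
  have start : ∀ {u P X}, G.PathOn T w u P X → u ∈ X := by
    intro u P X h
    cases h <;> simp
  induction h with
  | nil => simp at he
  | cons e' b' he' h1 h2 hX h ih =>
    rcases Finset.mem_insert.1 he with rfl | he
    · rcases Bool.eq_or_eq_not b b' with rfl | rfl
      · simp [h1]
      · rw [h2]
        exact Finset.mem_insert_of_mem (start h)
    · exact Finset.mem_insert_of_mem (ih he)

end PathOn

theorem degOn_insert [Fintype E] {e : E} (he : e ∉ P) (b : Bool) (v : V) :
    G.degOn (insert e P) v = G.degOn P v + (if G.ends e b = v then 1 else 0) +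
      (if G.ends e (!b) = v then 1 else 0) := by
  rw [degOn_eq_sum, Finset.sum_insert he, ← degOn_eq_sum]
  cases b <;> simp <;> ring

namespace PathOn

/-- Inner vertices of a path have degree `2`, distinct end vertices have degree `1`; the formula
covers the trivial path as well. -/
theorem degOn_add [Fintype E] (h : G.PathOn T w u P X) (v : V) :
    G.degOn P v + (if u = v then 1 else 0) + (if w = v then 1 else 0) =
      if v ∈ X then 2 else 0 := by
  induction h with
  | nil =>
    rw [degOn_eq_sum]
    by_cases hv : w = v
    · simp [hv]
    · simp [hv, Ne.symm hv]
  | @cons u a P X e b he h1 h2 hX h ih =>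
    have heP : e ∉ P := fun h' => hX (h1 ▸ h.ends_mem h' b)
    rw [degOn_insert heP b, h1, h2]
    by_cases hv : a = v
    · subst hv
      simp only [hX, if_false] at ih
      simp
      omega
    · have hv' : v ≠ a := fun h => hv h.symm
      simp only [Finset.mem_insert, hv', false_or, hv, if_false]
      omega

theorem prod_eq {σ : E → ℤˣ} {f : V → ℤˣ}
    (hf : ∀ e ∈ T, σ e = f (G.ends e true) * f (G.ends e false)) (h : G.PathOn T w u P X) :
    ∏ e ∈ P, σ e = f u * f w := by
  induction h with
  | nil => simp [Int.units_mul_self]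
  | @cons u a P X e b he h1 h2 hX h ih =>
    have heP : e ∉ P := fun h' => hX (h1 ▸ h.ends_mem h' b)
    have : σ e = f a * f u := by
      rw [hf e he, ← h1, ← h2]
      cases b
      · exact mul_comm _ _
      · rfl
    rw [Finset.prod_insert heP, ih, this, mul_assoc, ← mul_assoc (f u), Int.units_mul_self,
      one_mul]

/-- A path together with a new edge joining its ends is a circuit. -/
theorem isCircuit [Fintype E] {e : E} (h : G.PathOn T (G.ends e false) (G.ends e true) P X) (he : e ∉ P) :
    G.IsCircuit (insert e P) := by
  have deg : ∀ v, G.degOn (insert e P) v = if v ∈ X then 2 else 0 := by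
    intro v
    rw [degOn_insert he true]
    exact h.degOn_add v
  have inc : ∀ v, G.IncidentOn (insert e P) v → v ∈ X := by
    rintro v ⟨e', he', b, rfl⟩
    by_contra hv
    have h0 := deg (G.ends e' b)
    rw [if_neg hv, degOn_eq_sum, Finset.sum_eq_zero_iff] at h0
    have h1 := h0 e' he'
    cases b <;> simp at h1
  refine ⟨⟨e, Finset.mem_insert_self _ _⟩, ?_, ?_⟩
  · intro v hv
    rw [deg, if_pos (inc v hv)]
  · intro a c ha hc
    exact reachOn_mono (Finset.subset_insert _ _)
      ((h.reach (inc a ha)).trans (reachOn_symm (h.reach (inc c hc))))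

end PathOn

/-- Harary's theorem: a balanced signature is a coboundary. -/
theorem IsBalanced.exists_potential [Fintype E] {σ : E → ℤˣ} (hbal : G.IsBalanced σ) :
    ∃ f : V → ℤˣ, ∀ e, σ e = f (G.ends e true) * f (G.ends e false) := by
  classical
  suffices H : ∀ T : Finset E, ∃ f : V → ℤˣ,
      ∀ e ∈ T, σ e = f (G.ends e true) * f (G.ends e false) by
    obtain ⟨f, hf⟩ := H Finset.univ
    exact ⟨f, fun e => hf e (Finset.mem_univ e)⟩
  intro T
  induction T using Finset.induction_on with
  | empty => exact ⟨fun _ => 1, by simp⟩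
  | insert e T he ih =>
    obtain ⟨f, hf⟩ := ih
    by_cases hr : Relation.ReflTransGen (G.AdjOn T) (G.ends e true) (G.ends e false)
    · obtain ⟨P, X, hP⟩ := PathOn.of_reach hr
      have heP : e ∉ P := fun h => he (hP.subset h)
      have h1 := hbal _ (hP.isCircuit heP)
      rw [Finset.prod_insert heP, hP.prod_eq hf] at h1
      refine ⟨f, fun e' he' => ?_⟩
      rcases Finset.mem_insert.1 he' with rfl | he'
      · rw [mul_eq_one_iff_eq_inv, Int.units_inv_eq_self] at h1
        exact h1
      · exact hf e' he'
    · set s : ℤˣ := σ e * (f (G.ends e true) * f (G.ends e false)) with hs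
      -- Multiplying `f` by `s` on the component of one end of `e` leaves the other edges correct.
      refine ⟨fun v => if Relation.ReflTransGen (G.AdjOn T) (G.ends e true) v
        then s * f v else f v, fun e' he' => ?_⟩
      rcases Finset.mem_insert.1 he' with rfl | he'
      · simp only [hr, if_false, Relation.ReflTransGen.refl, if_true]
        rw [mul_assoc, hs, mul_assoc, Int.units_mul_self, mul_one]
      · have hadj : G.AdjOn T (G.ends e' true) (G.ends e' false) := ⟨e', he', Or.inl ⟨rfl, rfl⟩⟩
        rw [hf e' he']
        by_cases h1 : Relation.ReflTransGen (G.AdjOn T) (G.ends e true) (G.ends e' true)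
        · have h2 := h1.tail hadj
          simp only [h1, h2, if_true]
          rw [mul_mul_mul_comm, Int.units_mul_self, one_mul]
        · have h2 : ¬ Relation.ReflTransGen (G.AdjOn T) (G.ends e true) (G.ends e' false) :=
            fun h => h1 (h.tail hadj.symm)
          simp only [h1, h2, if_false]

end Path

/-! ### Petersen's theorem -/

/-- König's edge coloring theorem for regular bipartite multigraphs: the edge `e` joins `tl e` on
one side to `hd e` on the other. -/
theorem regular_bipartite_coloring {V E : Type*} [Fintype V] [DecidableEq V] [DecidableEq E]
    (tl hd : E → V) (k : ℕ) : ∀ S : Finset E,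
    (∀ v, (S.filter fun e => tl e = v).card = k) → (∀ v, (S.filter fun e => hd e = v).card = k) →
    ∃ c : E → ℕ, (∀ e ∈ S, c e < k) ∧ ∀ e₁ ∈ S, ∀ e₂ ∈ S, c e₁ = c e₂ →
      (tl e₁ = tl e₂ ∨ hd e₁ = hd e₂) → e₁ = e₂ := by
  induction k with
  | zero =>
    intro S h1 _
    have : ∀ e, e ∉ S := by
      intro e he
      have := h1 (tl e)
      rw [Finset.card_eq_zero, Finset.filter_eq_empty_iff] at this
      exact this he rfl
    exact ⟨fun _ => 0, fun e he => absurd he (this e), fun e he => absurd he (this e)⟩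
  | succ k ih =>
    intro S h1 h2
    let t : V → Finset V := fun v => (S.filter fun e => tl e = v).image hd
    have hall : ∀ A : Finset V, A.card ≤ (A.biUnion t).card := by
      intro A
      have e1 : (S.filter fun e => tl e ∈ A).card = (k + 1) * A.card := by
        rw [Finset.card_eq_sum_card_fiberwise (f := tl) (t := A) (by intro e; simp)]
        rw [Finset.sum_congr rfl (g := fun _ => k + 1), Finset.sum_const, smul_eq_mul, mul_comm]
        intro v hv
        rw [← h1 v, Finset.filter_filter]
        congr 1
        ext e
        simp only [Finset.mem_filter]
        constructor
        · tauto
        · rintro ⟨he, rfl⟩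
          exact ⟨he, hv, rfl⟩
      have e2 : (S.filter fun e => tl e ∈ A).card ≤ (k + 1) * (A.biUnion t).card := by
        refine Finset.card_le_mul_card_image_of_maps_to (f := hd) ?_ _ ?_
        · intro e he
          rw [Finset.mem_filter] at he
          rw [Finset.mem_biUnion]
          exact ⟨tl e, he.2, Finset.mem_image_of_mem _ (by simp [he.1])⟩
        · intro v _
          rw [← h2 v]
          refine Finset.card_le_card ?_
          exact Finset.filter_subset_filter _ (Finset.filter_subset _ _)
      rw [e1] at e2
      exact Nat.le_of_mul_le_mul_left e2 (Nat.succ_pos k)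
    obtain ⟨f, hfi, hft⟩ := (Finset.all_card_le_biUnion_card_iff_exists_injective t).1 hall
    have hm : ∀ v, ∃ e, e ∈ S ∧ tl e = v ∧ hd e = f v := by
      intro v
      obtain ⟨e, he, h⟩ := Finset.mem_image.1 (hft v)
      rw [Finset.mem_filter] at he
      exact ⟨e, he.1, he.2, h⟩
    choose m hmS hmt hmh using hm
    have hfs : Function.Surjective f := Finite.surjective_of_injective hfi
    obtain ⟨c, hc1, hc2⟩ := ih (S \ Finset.univ.image m) (by
      intro v
      have : ((S \ Finset.univ.image m).filter fun e => tl e = v) =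
          (S.filter fun e => tl e = v).erase (m v) := by
        ext e
        simp only [Finset.mem_filter, Finset.mem_sdiff, Finset.mem_image, Finset.mem_univ,
          true_and, Finset.mem_erase, not_exists]
        constructor
        · rintro ⟨⟨he, hn⟩, rfl⟩
          exact ⟨fun h => hn _ h.symm, he, rfl⟩
        · rintro ⟨hn, he, rfl⟩
          refine ⟨⟨he, fun x hx => hn ?_⟩, rfl⟩
          rw [← hx, hmt]
      rw [this, Finset.card_erase_of_mem (by simp [hmS, hmt]), h1, Nat.add_sub_cancel]) (by
      intro w
      obtain ⟨v, rfl⟩ := hfs w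
      have : ((S \ Finset.univ.image m).filter fun e => hd e = f v) =
          (S.filter fun e => hd e = f v).erase (m v) := by
        ext e
        simp only [Finset.mem_filter, Finset.mem_sdiff, Finset.mem_image, Finset.mem_univ,
          true_and, Finset.mem_erase, not_exists]
        constructor
        · rintro ⟨⟨he, hn⟩, h⟩
          exact ⟨fun h => hn _ h.symm, he, h⟩
        · rintro ⟨hn, he, h⟩
          refine ⟨⟨he, fun x hx => hn ?_⟩, h⟩
          rw [← hx, hmh] at h
          rw [← hx, hfi h]
      rw [this, Finset.card_erase_of_mem (by simp [hmS, hmh]), h2, Nat.add_sub_cancel])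
    refine ⟨fun e => if e ∈ Finset.univ.image m then k else c e, ?_, ?_⟩
    · intro e he
      by_cases h : e ∈ Finset.univ.image m
      · simp only [h, if_true]
        omega
      · have := hc1 e (Finset.mem_sdiff.2 ⟨he, h⟩)
        simp only [h, if_false]
        omega
    · intro e₁ he₁ e₂ he₂ hc hor
      by_cases h₁ : e₁ ∈ Finset.univ.image m <;> by_cases h₂ : e₂ ∈ Finset.univ.image m <;>
        simp only [h₁, h₂, if_true, if_false] at hc
      · obtain ⟨x, _, rfl⟩ := Finset.mem_image.1 h₁
        obtain ⟨y, _, rfl⟩ := Finset.mem_image.1 h₂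
        rw [hmt, hmt, hmh, hmh] at hor
        rw [hor.elim id (fun h => hfi h)]
      · have := hc1 e₂ (Finset.mem_sdiff.2 ⟨he₂, h₂⟩)
        omega
      · have := hc1 e₁ (Finset.mem_sdiff.2 ⟨he₁, h₁⟩)
        omega
      · exact hc2 e₁ (Finset.mem_sdiff.2 ⟨he₁, h₁⟩) e₂ (Finset.mem_sdiff.2 ⟨he₂, h₂⟩) hc hor

/-- A `2k`-regular multigraph has an orientation with all in- and outdegrees equal to `k`; the tail
of `e` is `ends e (o e)`. -/
theorem exists_eulerian_orientation {V E : Type*} [Fintype V] [Fintype E] [DecidableEq V]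
    [DecidableEq E] (G : Multigraph V E) (k : ℕ) (hG : ∀ v, G.degree v = 2 * k) :
    ∃ o : E → Bool, (∀ v, (Finset.univ.filter fun e => G.ends e (o e) = v).card = k) ∧
      ∀ v, (Finset.univ.filter fun e => G.ends e (!o e) = v).card = k := by
  -- The elements of `V × Fin k` are slots; an edge will occupy a slot at its tail.
  let W : E → Finset V := fun e => Finset.univ.image (G.ends e)
  let t : E → Finset (V × Fin k) := fun e => W e ×ˢ Finset.univ
  have hall : ∀ A : Finset E, A.card ≤ (A.biUnion t).card := by
    intro A
    have e1 : A.biUnion t = A.biUnion W ×ˢ Finset.univ := by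
      ext ⟨v, i⟩
      simp [t]
    have e2 : (A ×ˢ (Finset.univ : Finset Bool)).card ≤ (2 * k) * (A.biUnion W).card := by
      refine Finset.card_le_mul_card_image_of_maps_to (f := fun h => G.ends h.1 h.2) ?_ _ ?_
      · rintro ⟨e, b⟩ he
        have he : e ∈ A := by simpa using he
        exact Finset.mem_biUnion.2 ⟨e, he, Finset.mem_image_of_mem _ (Finset.mem_univ b)⟩
      · intro v _
        rw [← hG v]
        exact Finset.card_le_card (Finset.filter_subset_filter _ (Finset.subset_univ _))
    rw [e1, Finset.card_product, Finset.card_univ, Fintype.card_fin]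
    rw [Finset.card_product, Finset.card_univ, Fintype.card_bool] at e2
    nlinarith
  obtain ⟨g, hgi, hgt⟩ := (Finset.all_card_le_biUnion_card_iff_exists_injective t).1 hall
  have ho : ∀ e, ∃ b, G.ends e b = (g e).1 := by
    intro e
    have := (Finset.mem_product.1 (hgt e)).1
    obtain ⟨b, _, hb⟩ := Finset.mem_image.1 this
    exact ⟨b, hb⟩
  choose o ho using ho
  have out_le : ∀ v, (Finset.univ.filter fun e => G.ends e (o e) = v).card ≤ k := by
    intro v
    calc _ ≤ (Finset.univ : Finset (Fin k)).card := by
          refine Finset.card_le_card_of_injOn (fun e => (g e).2) (fun _ _ => by simp) ?_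
          intro e₁ h₁ e₂ h₂ h
          simp only [Finset.coe_filter, Finset.mem_univ, true_and, Set.mem_ofPred_eq, ho] at h₁ h₂
          exact hgi (Prod.ext (h₁.trans h₂.symm) h)
      _ = k := by simp
  have add_eq : ∀ v, (Finset.univ.filter fun e => G.ends e (o e) = v).card +
      (Finset.univ.filter fun e => G.ends e (!o e) = v).card = 2 * k := by
    intro v
    rw [← hG v, degree_eq_degOn, degOn_eq_sum, Finset.card_filter, Finset.card_filter,
      ← Finset.sum_add_distrib]
    refine Finset.sum_congr rfl fun e _ => ?_
    cases o e
    · exact add_comm _ _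
    · rfl
  have s1 : ∑ v, (Finset.univ.filter fun e => G.ends e (o e) = v).card = Fintype.card E :=
    (Finset.card_eq_sum_card_fiberwise (f := fun e => G.ends e (o e)) (by intro; simp)).symm
  have s2 : ∑ v, (Finset.univ.filter fun e => G.ends e (!o e) = v).card = Fintype.card E :=
    (Finset.card_eq_sum_card_fiberwise (f := fun e => G.ends e (!o e)) (by intro; simp)).symm
  have s3 : Fintype.card E = ∑ _v : V, k := by
    have := Finset.sum_congr rfl fun v (_ : v ∈ Finset.univ) => add_eq v
    rw [Finset.sum_add_distrib, s1, s2, ← Finset.mul_sum] at this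
    omega
  have out_eq : ∀ v, (Finset.univ.filter fun e => G.ends e (o e) = v).card = k := by
    intro v
    exact (Finset.sum_eq_sum_iff_of_le fun v _ => out_le v).1 (s1.trans s3) v (Finset.mem_univ v)
  refine ⟨o, out_eq, fun v => ?_⟩
  have h1 := add_eq v
  have h2 := out_eq v
  omega

/-- Two copies of `(V, S)`, with the copies of `v` joined by `2k - deg v` parallel edges. -/
def double {V E : Type*} [Fintype E] [DecidableEq V] [DecidableEq E] (G : Multigraph V E)
    (S : Finset E) (k : ℕ) :
    Multigraph (V × Bool) (({e // e ∈ S} × Bool) ⊕ (Σ v : V, Fin (2 * k - G.degOn S v))) where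
  ends := fun x b => match x with
    | Sum.inl (e, i) => (G.ends e b, i)
    | Sum.inr ⟨v, _⟩ => (v, b)

theorem degree_double {V E : Type*} [Fintype V] [Fintype E] [DecidableEq V] [DecidableEq E]
    (G : Multigraph V E) (S : Finset E) (k : ℕ) (hS : ∀ v, G.degOn S v ≤ 2 * k) (x : V × Bool) :
    (G.double S k).degree x = 2 * k := by
  obtain ⟨v, i⟩ := x
  have h1 : ∑ e : {e // e ∈ S}, ((if G.ends e true = v then 1 else 0) +
      (if G.ends e false = v then 1 else 0)) = G.degOn S v := by
    rw [degOn_eq_sum]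
    exact Finset.sum_coe_sort S fun e => ((if G.ends e true = v then 1 else 0) +
      (if G.ends e false = v then 1 else 0))
  rw [degree_eq_degOn, degOn_eq_sum, Fintype.sum_sum_type, Fintype.sum_prod_type,
    Fintype.sum_sigma]
  have h2 : ∑ u : V, ∑ j : Fin (2 * k - G.degOn S u),
      ((if (G.double S k).ends (Sum.inr ⟨u, j⟩) true = (v, i) then 1 else 0) +
        (if (G.double S k).ends (Sum.inr ⟨u, j⟩) false = (v, i) then 1 else 0)) =
      2 * k - G.degOn S v := by
    rw [Finset.sum_eq_single v]
    · cases i <;> simp [double]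
    · intro u _ hu
      simp [double, hu]
    · simp
  rw [h2]
  have h3 : ∑ e : {e // e ∈ S}, ∑ j : Bool,
      ((if (G.double S k).ends (Sum.inl (e, j)) true = (v, i) then 1 else 0) +
        (if (G.double S k).ends (Sum.inl (e, j)) false = (v, i) then 1 else 0)) =
      G.degOn S v := by
    rw [← h1]
    refine Finset.sum_congr rfl fun e _ => ?_
    cases i <;> simp [double]
  rw [h3]
  have := hS v
  omega

/-- Petersen's theorem: edges `S` with all degrees at most `2k` can be oriented and split into `k`
classes, each of in- and outdegree at most `1`. The half-edge `(e, b)` is outgoing if `b = o e` and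
incoming otherwise. -/
theorem petersen {V E : Type*} [Fintype V] [Fintype E] [DecidableEq V] [DecidableEq E]
    (G : Multigraph V E) (S : Finset E) (k : ℕ) (hS : ∀ v, G.degOn S v ≤ 2 * k) :
    ∃ (o : E → Bool) (c : E → ℕ), (∀ e ∈ S, c e < k) ∧ ∀ e₁ ∈ S, ∀ e₂ ∈ S, ∀ b₁ b₂,
      G.ends e₁ b₁ = G.ends e₂ b₂ → c e₁ = c e₂ → xor (o e₁) b₁ = xor (o e₂) b₂ → e₁ = e₂ := by
  obtain ⟨o, ho1, ho2⟩ := (G.double S k).exists_eulerian_orientation k (G.degree_double S k hS)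
  obtain ⟨c, hc1, hc2⟩ := regular_bipartite_coloring _ _ k Finset.univ ho1 ho2
  refine ⟨fun e => if h : e ∈ S then o (Sum.inl (⟨e, h⟩, true)) else true,
    fun e => if h : e ∈ S then c (Sum.inl (⟨e, h⟩, true)) else 0, ?_, ?_⟩
  · intro e he
    simp only [he, dif_pos]
    exact hc1 _ (Finset.mem_univ _)
  · intro e₁ he₁ e₂ he₂ b₁ b₂ hv hc hx
    simp only [he₁, he₂, dif_pos] at hc hx
    have key := hc2 _ (Finset.mem_univ _) _ (Finset.mem_univ _) hc ?_
    · simpa using key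
    · simp only [double]
      generalize o (Sum.inl (⟨e₁, he₁⟩, true)) = p at hx ⊢
      generalize o (Sum.inl (⟨e₂, he₂⟩, true)) = q at hx ⊢
      revert hx hv
      cases p <;> cases q <;> cases b₁ <;> cases b₂ <;> simp +contextual

/-! ### Colorings and matchings -/

theorem hasColoring_of_matching {V E : Type*} [Fintype V] [Fintype E] [DecidableEq V]
    [DecidableEq E] (G : Multigraph V E) (σ : E → ℤˣ) (hbal : G.IsBalanced σ) (M : Finset E)
    (hM : G.IsMatching M) (t k : ℕ) (ht : ∀ e ∈ M, 0 < t) (hk : ∀ v, G.degOn Mᶜ v ≤ 2 * k) :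
    G.HasColoring σ t k := by
  obtain ⟨f, hf⟩ := hbal.exists_potential
  obtain ⟨o, c, hc1, hc2⟩ := G.petersen Mᶜ k hk
  refine ⟨fun e b => f (G.ends e b) * if b then 1 else -1, fun e => ?_,
    fun e => if h : e ∈ M then Sum.inl ⟨0, ht e h⟩
      else Sum.inr (⟨c e, hc1 e (by simpa using h)⟩, o e), ?_⟩
  · simp [signOf, hf e]
  · intro e₁ b₁ e₂ b₂ hne hv heq
    by_cases h₁ : e₁ ∈ M <;> by_cases h₂ : e₂ ∈ M <;>
      simp only [hval, h₁, h₂, dif_pos, dif_neg, not_false_eq_true, symNeg, ite_self] at heq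
    · by_cases he : e₁ = e₂
      · subst he
        have hb : b₁ ≠ b₂ := fun h => hne (by rw [h])
        have := hM.1 e₁ h₁
        revert hv hb
        cases b₁ <;> cases b₂ <;> simp [this, this.symm]
      · exact hM.2 e₁ h₁ e₂ h₂ he b₁ b₂ hv
    · split_ifs at heq
    · split_ifs at heq
    · simp only [hv] at heq
      have h3 : c e₁ = c e₂ ∧ xor (o e₁) b₁ = xor (o e₂) b₂ := by
        rcases Int.units_eq_one_or (f (G.ends e₂ b₂)) with h | h <;> simp only [h] at heq <;>
          revert heq <;> cases b₁ <;> cases b₂ <;> cases o e₁ <;> cases o e₂ <;> simp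
      have he := hc2 e₁ (by simpa using h₁) e₂ (by simpa using h₂) b₁ b₂ hv h3.1 h3.2
      subst he
      exact hne (by rw [Bool.xor_right_inj.1 h3.2])

/-- The edges with self-inverse colors contribute at most `t` to each degree, the others `2k`. -/
theorem degree_le_of_coloring {V E : Type*} [Fintype E] [DecidableEq V]
    (G : Multigraph V E) (σ : E → ℤˣ) (t k : ℕ) (h : G.HasColoring σ t k) (v : V) :
    G.degree v ≤ 2 * k + t := by
  obtain ⟨τ, _, c, hc⟩ := h
  calc _ ≤ (Finset.univ : Finset (SymColor t k)).card := by
        refine Finset.card_le_card_of_injOn (fun h => hval τ c h.1 h.2) (fun _ _ => by simp) ?_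
        rintro ⟨e₁, b₁⟩ h₁ ⟨e₂, b₂⟩ h₂ h
        by_contra hne
        simp only [Finset.coe_filter, Finset.mem_univ, true_and, Set.mem_ofPred_eq] at h₁ h₂
        exact hc e₁ b₁ e₂ b₂ hne (h₁.trans h₂.symm) h
    _ = 2 * k + t := by
        simp
        ring

theorem exists_matching_of_coloring {V E : Type*} [Fintype E] [DecidableEq V] [DecidableEq E]
    (G : Multigraph V E) (σ : E → ℤˣ) (k : ℕ) (h : G.HasColoring σ 1 k) :
    ∃ M : Finset E, G.IsMatching M ∧ ∀ v, G.degOn Mᶜ v ≤ 2 * k := by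
  obtain ⟨τ, _, c, hc⟩ := h
  have hz : ∀ e b, c e = Sum.inl 0 → hval τ c e b = Sum.inl 0 := by
    intro e b h
    simp [hval, h, symNeg]
  refine ⟨Finset.univ.filter fun e => c e = Sum.inl 0, ⟨?_, ?_⟩, ?_⟩
  · intro e he hl
    have he : c e = Sum.inl 0 := by simpa using he
    exact hc e true e false (by simp) hl (by rw [hz _ _ he, hz _ _ he])
  · intro e₁ he₁ e₂ he₂ hne b₁ b₂ hl
    have he₁ : c e₁ = Sum.inl 0 := by simpa using he₁
    have he₂ : c e₂ = Sum.inl 0 := by simpa using he₂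
    exact hc e₁ b₁ e₂ b₂ (by simp [hne]) hl (by rw [hz _ _ he₁, hz _ _ he₂])
  · intro v
    calc _ ≤ ((Finset.univ : Finset (Fin k × Bool)).image
          (Sum.inr : Fin k × Bool → SymColor 1 k)).card := by
          refine Finset.card_le_card_of_injOn (fun h => hval τ c h.1 h.2) ?_ ?_
          · rintro ⟨e, b⟩ h
            have h : c e ≠ Sum.inl 0 := by
              simp at h
              exact h.1
            rcases hce : c e with a | ⟨i, s⟩
            · exact absurd (by rw [hce, Subsingleton.elim a 0]) h
            · simp only [hval, hce, symNeg]
              split_ifs <;> simp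
          · rintro ⟨e₁, b₁⟩ h₁ ⟨e₂, b₂⟩ h₂ h
            by_contra hne
            simp only [Finset.coe_filter, Finset.mem_univ, true_and, Set.mem_ofPred_eq] at h₁ h₂
            exact hc e₁ b₁ e₂ b₂ hne (h₁.2.trans h₂.2.symm) h
      _ ≤ (Finset.univ : Finset (Fin k × Bool)).card := Finset.card_image_le
      _ = 2 * k := by
          simp
          ring

theorem degree_le_degOn_compl_add_one {V E : Type*} [Fintype E] [DecidableEq V] [DecidableEq E]
    (G : Multigraph V E) (M : Finset E) (hM : G.IsMatching M) (v : V) :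
    G.degree v ≤ G.degOn Mᶜ v + 1 := by
  have h1 : G.degree v = G.degOn Mᶜ v + G.degOn M v := by
    rw [degree_eq_degOn, degOn_eq_sum, degOn_eq_sum, degOn_eq_sum, Finset.sum_compl_add_sum]
  have h2 : G.degOn M v ≤ 1 := by
    unfold degOn
    rw [Finset.card_le_one]
    rintro ⟨e₁, b₁⟩ h₁ ⟨e₂, b₂⟩ h₂
    simp only [Finset.mem_filter, Finset.mem_univ, true_and] at h₁ h₂
    have hv := h₁.2.trans h₂.2.symm
    by_cases he : e₁ = e₂
    · subst he
      have := hM.1 e₁ h₁.1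
      revert hv
      cases b₁ <;> cases b₂ <;> simp [this, this.symm]
    · exact absurd hv (hM.2 e₁ h₁.1 e₂ h₂.1 he b₁ b₂)
  omega

theorem degOn_le_degree {V E : Type*} [Fintype E] [DecidableEq V] [DecidableEq E]
    (G : Multigraph V E) (S : Finset E) (v : V) : G.degOn S v ≤ G.degree v := by
  refine Finset.card_le_card ?_
  intro h
  simp only [Finset.mem_filter, Finset.mem_univ, true_and]
  exact fun h => h.2

theorem isMatching_empty {V E : Type*} (G : Multigraph V E) : G.IsMatching (∅ : Finset E) := by
  simp [IsMatching]

theorem hasColoring_of_maxDegree_le {V E : Type*} [Fintype V] [Fintype E] [DecidableEq V]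
    [DecidableEq E] (G : Multigraph V E) (σ : E → ℤˣ) (hbal : G.IsBalanced σ) (t k : ℕ)
    (hk : G.maxDegree ≤ 2 * k) : G.HasColoring σ t k := by
  refine G.hasColoring_of_matching σ hbal ∅ G.isMatching_empty t k (by simp) fun v => ?_
  exact (G.degOn_le_degree _ v).trans
    ((Finset.le_sup (f := fun v => G.degree v) (Finset.mem_univ v)).trans hk)

/-- Balance guarantees that a coloring exists, so the infimum is attained. -/
theorem maxDegree_le_chiSub {V E : Type*} [Fintype V] [Fintype E] [DecidableEq V]
    [DecidableEq E] (G : Multigraph V E) (σ : E → ℤˣ) (hbal : G.IsBalanced σ) (i : ℕ) :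
    G.maxDegree ≤ G.chiSub σ i := by
  have hne : {n : ℕ | ∃ k, n = 2 * k + i ∧ G.HasColoring σ i k}.Nonempty :=
    ⟨_, G.maxDegree, rfl, G.hasColoring_of_maxDegree_le σ hbal i _ (by omega)⟩
  obtain ⟨k, hk, hcol⟩ := Nat.sInf_mem hne
  unfold chiSub
  rw [hk]
  exact Finset.sup_le fun v _ => G.degree_le_of_coloring σ i k hcol v

theorem chiSub_le {V E : Type*} (G : Multigraph V E) (σ : E → ℤˣ) (i k : ℕ)
    (h : G.HasColoring σ i k) : G.chiSub σ i ≤ 2 * k + i :=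
  Nat.sInf_le ⟨k, rfl, h⟩

/-- This holds also if there is no coloring, where `chiSub` is `0`. -/
theorem even_chiSub_zero {V E : Type*} (G : Multigraph V E) (σ : E → ℤˣ) :
    Even (G.chiSub σ 0) := by
  unfold chiSub
  rcases Set.eq_empty_or_nonempty {n : ℕ | ∃ k, n = 2 * k + 0 ∧ G.HasColoring σ 0 k} with h | h
  · rw [h]
    simp
  · obtain ⟨k, hk, _⟩ := Nat.sInf_mem h
    rw [hk]
    simp

end Multigraph

/-- For a balanced signed multigraph `(G, σ)`,
`χ'(G, σ) = Δ(G)` if and only if `G` has a (possibly empty) matching `M`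
such that `Δ(G − M)` is even. -/
theorem chromaticIndex_eq_maxDegree_iff_of_balanced
    {V E : Type*} [Fintype V] [Fintype E] [DecidableEq V] [DecidableEq E]
    (G : Multigraph V E) (σ : E → ℤˣ) (hbal : G.IsBalanced σ) :
    G.chromaticIndex σ = G.maxDegree ↔
      ∃ M : Finset E, G.IsMatching M ∧
        Even (Finset.univ.sup fun v => G.degOn Mᶜ v) := by
 
  have hle : ∀ M : Finset E, (Finset.univ.sup fun v => G.degOn Mᶜ v) ≤ G.maxDegree := fun M =>
    Finset.sup_mono_fun fun v _ => G.degOn_le_degree _ v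
  have hge : ∀ M : Finset E, G.IsMatching M →
      G.maxDegree ≤ (Finset.univ.sup fun v => G.degOn Mᶜ v) + 1 := fun M hM =>
    Finset.sup_le fun v hv => (G.degree_le_degOn_compl_add_one M hM v).trans
      (Nat.succ_le_succ (Finset.le_sup (f := fun v => G.degOn Mᶜ v) hv))
  have h0 := G.maxDegree_le_chiSub σ hbal 0
  have h1 := G.maxDegree_le_chiSub σ hbal 1
  rcases Nat.even_or_odd G.maxDegree with hΔ | hΔ
  · refine iff_of_true ?_ ⟨∅, G.isMatching_empty, ?_⟩
    · obtain ⟨k, hk⟩ := hΔ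
      have := G.chiSub_le σ 0 k (G.hasColoring_of_maxDegree_le σ hbal 0 k (by omega))
      unfold Multigraph.chromaticIndex
      omega
    · simp only [Finset.compl_empty, ← Multigraph.degree_eq_degOn]
      exact hΔ
  · constructor
    · intro h
      have h2 : G.chiSub σ 1 = G.maxDegree := by
        rcases min_choice (G.chiSub σ 0) (G.chiSub σ 1) with h3 | h3
        · have h4 := G.even_chiSub_zero σ
          rw [← h3] at h4
          unfold Multigraph.chromaticIndex at h
          rw [h] at h4
          exact absurd h4 (Nat.not_even_iff_odd.2 hΔ)
        · exact h3.symm.trans h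
      have hne : {n : ℕ | ∃ k, n = 2 * k + 1 ∧ G.HasColoring σ 1 k}.Nonempty := by
        refine Nat.nonempty_of_pos_sInf ?_
        change 0 < G.chiSub σ 1
        rw [h2]
        exact hΔ.pos
      obtain ⟨k, hk, hcol⟩ := Nat.sInf_mem hne
      change G.chiSub σ 1 = _ at hk
      obtain ⟨M, hM, hMk⟩ := G.exists_matching_of_coloring σ k hcol
      refine ⟨M, hM, k, ?_⟩
      have h3 : (Finset.univ.sup fun v => G.degOn Mᶜ v) ≤ 2 * k := Finset.sup_le fun v _ => hMk v
      have h4 := hge M hM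
      omega
    · rintro ⟨M, hM, k, hk⟩
      have h3 := hle M
      have h4 := hge M hM
      obtain ⟨j, hj⟩ := hΔ
      have h5 := G.chiSub_le σ 1 k (G.hasColoring_of_matching σ hbal M hM 1 k (by simp) fun v => by
        have := Finset.le_sup (f := fun v => G.degOn Mᶜ v) (Finset.mem_univ v)
        omega)
      unfold Multigraph.chromaticIndex
      omega
end

section
/- The edge set of any multigraph G can be decomposed into ⌈Δ(G)/2⌉ layers, i.e., E(G) is the disjoint union of ⌈Δ(G)/2⌉ sets each of which is the edge set of a spanning subgraph of maximum degree at most 2. -/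
namespace LayerDecomposition

open Finset

/-! ### Balanced signings of bipartite multigraphs -/

/-- The signs `c` on `S` have sum `-1`, `0` or `1` over each fibre of `r`. -/
def IsBalanced {F A : Type*} [DecidableEq A] (S : Finset F) (r : F → A) (c : F → ℤ) : Prop :=
  ∀ a, |∑ x ∈ S, if r x = a then c x else 0| ≤ 1

/-- There are signs on `S` balanced for `s` and `t` at once. -/
def IsBalanceable {F A B : Type*} [DecidableEq A] [DecidableEq B] (S : Finset F) (s : F → A)
    (t : F → B) : Prop :=
  ∃ c : F → ℤ, (∀ x, c x = 1 ∨ c x = -1) ∧ IsBalanced S s c ∧ IsBalanced S t c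

lemma isBalanced_one_of_injOn {F A : Type*} [DecidableEq A] {S : Finset F} {r : F → A}
    (hr : ¬ ∃ x ∈ S, ∃ y ∈ S, x ≠ y ∧ r x = r y) : IsBalanced S r fun _ => 1 := by
  intro a
  rw [sum_boole, Nat.abs_cast]
  exact_mod_cast card_le_one.2 fun x hx y hy => by grind

section Balance

variable {F A B : Type*} [DecidableEq F] [DecidableEq A] [DecidableEq B]

lemma sum_eq_add_erase {S : Finset F} {x y : F} (hx : x ∈ S) (hy : y ∈ S) (hxy : x ≠ y)
    (g : F → ℤ) : ∑ z ∈ S, g z = g x + g y + ∑ z ∈ (S.erase x).erase y, g z := by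
  rw [← add_sum_erase S g hx, ← add_sum_erase (S.erase x) g (mem_erase.2 ⟨hxy.symm, hy⟩), add_assoc]

/-- Fibre sums after the signs of `x` and `y` are set to `1` and `-1`. -/
lemma sum_sign_pair {S : Finset F} {x y : F} (hx : x ∈ S) (hy : y ∈ S) (hxy : x ≠ y)
    (r : F → A) (c : F → ℤ) (a : A) :
    ∑ w ∈ S, (if r w = a then (if w = x then 1 else if w = y then -1 else c w) else 0) =
      (if r x = a then 1 else 0) + (if r y = a then -1 else 0) +
        ∑ w ∈ (S.erase x).erase y, if r w = a then c w else 0 := by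
  rw [sum_eq_add_erase hx hy hxy]
  congr 1
  · simp [hxy.symm]
  · exact sum_congr rfl fun w hw => by grind

/-- A path `x, y, z` of edges is replaced by the single edge `z`, whose end `t z` is moved to `t x`.
In a balanced signing of the smaller graph, `x` then receives the sign of `z` and `y` the opposite
one. -/
lemma isBalanceable_of_path {S : Finset F} {s : F → A} {t : F → B}
    (ih : ∀ S' : Finset F, S' ⊂ S → ∀ (s : F → A) (t : F → B), IsBalanceable S' s t)
    {x y z : F} (hx : x ∈ S) (hy : y ∈ S) (hz : z ∈ S) (hxy : x ≠ y) (hxz : x ≠ z) (hyz : y ≠ z)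
    (hs : s x = s y) (ht : t y = t z) : IsBalanceable S s t := by
  obtain ⟨c, hc, hcs, hct⟩ := ih ((S.erase x).erase y)
    (((S.erase x).erase_subset y).trans_ssubset (erase_ssubset hx)) s (Function.update t z (t x))
  have hz' : z ∈ (S.erase x).erase y := by simp [hz, hxz.symm, hyz.symm]
  refine ⟨fun w => if w = x then c z else if w = y then -c z else c w, ?_, ?_, ?_⟩
  · intro w
    have := hc w
    have := hc z
    grind
  · intro a
    convert hcs a using 2
    rw [sum_eq_add_erase hx hy hxy]
    have h : ∑ w ∈ (S.erase x).erase y,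
        (if s w = a then (if w = x then c z else if w = y then -c z else c w) else 0) =
        ∑ w ∈ (S.erase x).erase y, if s w = a then c w else 0 :=
      sum_congr rfl fun w hw => by grind
    rw [h]
    grind
  · intro a
    convert hct a using 2
    rw [sum_eq_add_erase hx hy hxy, ← add_sum_erase _ _ hz', ← add_sum_erase _ _ hz']
    have h : ∑ w ∈ ((S.erase x).erase y).erase z,
        (if t w = a then (if w = x then c z else if w = y then -c z else c w) else 0) =
        ∑ w ∈ ((S.erase x).erase y).erase z, if Function.update t z (t x) w = a then c w else 0 :=
      sum_congr rfl fun w hw => by grind [Function.update_of_ne]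
    rw [h, Function.update_self]
    grind

/-- The inductive step when two edges share an end. Unless these two edges extend to a path of three
edges, they are parallel or have no other edge at their `t`-ends, and receive opposite signs. -/
lemma isBalanceable_of_eq {S : Finset F} {s : F → A} {t : F → B}
    (ih : ∀ S' : Finset F, S' ⊂ S → ∀ (s : F → A) (t : F → B), IsBalanceable S' s t)
    {x y : F} (hx : x ∈ S) (hy : y ∈ S) (hxy : x ≠ y) (hs : s x = s y) :
    IsBalanceable S s t := by
  by_cases hp : t x ≠ t y ∧ ∃ z ∈ S, z ≠ x ∧ z ≠ y ∧ (t y = t z ∨ t x = t z)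
  · obtain ⟨-, z, hz, hzx, hzy, h | h⟩ := hp
    · exact isBalanceable_of_path ih hx hy hz hxy hzx.symm hzy.symm hs h
    · exact isBalanceable_of_path ih hy hx hz hxy.symm hzy.symm hzx.symm hs.symm h
  obtain ⟨c, hc, hcs, hct⟩ := ih ((S.erase x).erase y)
    (((S.erase x).erase_subset y).trans_ssubset (erase_ssubset hx)) s t
  refine ⟨fun w => if w = x then 1 else if w = y then -1 else c w, ?_, ?_, ?_⟩
  · intro w
    have := hc w
    grind
  · intro a
    convert hcs a using 2
    rw [sum_sign_pair hx hy hxy]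
    grind
  · intro a
    by_cases ha : t x ≠ t y ∧ (t x = a ∨ t y = a)
    · have h0 : ∑ w ∈ (S.erase x).erase y, (if t w = a then c w else 0) = 0 :=
        sum_eq_zero fun w hw => by grind
      rw [sum_sign_pair hx hy hxy, h0]
      obtain ⟨hne, h | h⟩ := ha
      · have : t y ≠ a := by grind
        simp [h, this]
      · have : t x ≠ a := by grind
        simp [h, this]
    · convert hct a using 2
      rw [sum_sign_pair hx hy hxy]
      grind

/-- The splitting principle: any two maps on a finite set admit a common balanced signing. -/
theorem exists_isBalanced (S : Finset F) : ∀ (s : F → A) (t : F → B), IsBalanceable S s t := by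
  induction S using Finset.strongInduction with
  | H S ih =>
    intro s t
    by_cases hs : ∃ x ∈ S, ∃ y ∈ S, x ≠ y ∧ s x = s y
    · obtain ⟨x, hx, y, hy, hxy, h⟩ := hs
      exact isBalanceable_of_eq ih hx hy hxy h
    by_cases ht : ∃ x ∈ S, ∃ y ∈ S, x ≠ y ∧ t x = t y
    · obtain ⟨x, hx, y, hy, hxy, h⟩ := ht
      obtain ⟨c, hc, h₁, h₂⟩ := isBalanceable_of_eq (s := t) (t := s)
        (fun S' hS' t s => (ih S' hS' s t).imp fun c h => ⟨h.1, h.2.2, h.2.1⟩) hx hy hxy h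
      exact ⟨c, hc, h₂, h₁⟩
    -- All fibres now have at most one element.
    exact ⟨fun _ => 1, fun _ => Or.inl rfl, isBalanced_one_of_injOn hs, isBalanced_one_of_injOn ht⟩

/-- In a balanced signing, the elements of a two-element fibre have opposite signs. -/
lemma IsBalanced.ne {S : Finset F} {r : F → A} {c : F → ℤ} (hb : IsBalanced S r c)
    (hc : ∀ x, c x = 1 ∨ c x = -1) {x y : F} (hx : x ∈ S) (hy : y ∈ S) (hxy : x ≠ y)
    (h : r x = r y) (huniq : ∀ z ∈ S, r z = r x → z = x ∨ z = y) : c x ≠ c y := by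
  have h1 := hb (r x)
  have h0 : ∑ w ∈ (S.erase x).erase y, (if r w = r x then c w else 0) = 0 :=
    sum_eq_zero fun w hw => by grind
  rw [sum_eq_add_erase hx hy hxy, h0, if_pos rfl, if_pos h.symm, add_zero, abs_le] at h1
  have := hc x
  have := hc y
  omega

end Balance

/-! ### Edge colouring of bipartite multigraphs -/

/-- If fewer than `k` edges of `S` lie in the fibre of `a`, some colour is not used on them. -/
lemma exists_free_color {E A : Type*} [DecidableEq A] {k : ℕ} (S : Finset E) (r : E → A)
    (f : E → Fin k) (a : A)
    (h : (S.filter fun x => r x = a).card < k) : ∃ i, ∀ x ∈ S, r x = a → f x ≠ i := by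
  have hlt : ((S.filter fun x => r x = a).image f).card < (univ : Finset (Fin k)).card := by
    rw [card_univ, Fintype.card_fin]
    exact card_image_le.trans_lt h
  obtain ⟨i, -, hi⟩ := exists_mem_notMem_of_card_lt_card hlt
  exact ⟨i, fun x hx hr hfi => hi (mem_image.2 ⟨x, mem_filter.2 ⟨hx, hr⟩, hfi⟩)⟩

section Coloring

variable {E A B : Type*} [DecidableEq E] [DecidableEq A] [DecidableEq B]

/-- The edges of `S` at a common `r`-end have distinct colours. -/
def IsProper {k : ℕ} (S : Finset E) (r : E → A) (f : E → Fin k) : Prop :=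
  ∀ x ∈ S, ∀ y ∈ S, r x = r y → f x = f y → x = y

/-- If the colour `i` is free at the end `r e` of a new edge `e`, then `e` and the edges coloured `i`
or `j` form a set with at most two edges at each vertex; so a balanced signing of this set
gives a proper recolouring. -/
lemma IsProper.recolor {k : ℕ} {S : Finset E} {r : E → A} {f : E → Fin k} (hf : IsProper S r f)
    {e : E} {i j l m : Fin k} (hlm : l ≠ m) (hij : (i = l ∧ j = m) ∨ (i = m ∧ j = l))
    (hfree : ∀ x ∈ S, r x = r e → f x ≠ i)
    {c : E → ℤ} (hc : ∀ x, c x = 1 ∨ c x = -1)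
    (hb : IsBalanced (insert e (S.filter fun x => f x = l ∨ f x = m)) r c) :
    IsProper (insert e S) r fun x =>
      if x ∈ insert e (S.filter fun x => f x = l ∨ f x = m) then (if c x = 1 then l else m)
      else f x := by
  intro x hx y hy hr hxy
  by_contra hne
  by_cases hxT : x ∈ insert e (S.filter fun x => f x = l ∨ f x = m)
  · by_cases hyT : y ∈ insert e (S.filter fun x => f x = l ∨ f x = m)
    · refine hb.ne hc hxT hyT hne hr ?_ ?_
      · intro z hz hzx
        by_contra hzne
        simp only [mem_insert, mem_filter] at hxT hyT hz
        unfold IsProper at hf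
        grind
      · have := hc x
        have := hc y
        simp only [hxT, hyT, if_true] at hxy
        grind
    · simp only [hxT, hyT, if_true, if_false] at hxy
      grind
  · by_cases hyT : y ∈ insert e (S.filter fun x => f x = l ∨ f x = m)
    · simp only [hxT, hyT, if_true, if_false] at hxy
      grind
    · simp only [hxT, hyT, if_false] at hxy
      exact hne (hf x (by grind) y (by grind) hr hxy)

/-- **König's edge colouring theorem**: a bipartite multigraph of maximum degree at most `k` has a
proper edge colouring with `k` colours. -/
theorem exists_edge_coloring [Fintype E] {k : ℕ} (s : E → A) (t : E → B)
    (hs : ∀ a, (univ.filter fun x => s x = a).card ≤ k)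
    (ht : ∀ b, (univ.filter fun x => t x = b).card ≤ k) :
    ∃ f : E → Fin k, IsProper univ s f ∧ IsProper univ t f := by
  rcases isEmpty_or_nonempty E with hE | ⟨⟨e₀⟩⟩
  · exact ⟨isEmptyElim, fun x => isEmptyElim x, fun x => isEmptyElim x⟩
  have hk : 0 < k := lt_of_lt_of_le (card_pos.2 ⟨e₀, by simp⟩) (hs (s e₀))
  suffices h : ∀ S : Finset E, ∃ f : E → Fin k, IsProper S s f ∧ IsProper S t f from h univ
  intro S
  induction S using Finset.induction_on with
  | empty => exact ⟨fun _ => ⟨0, hk⟩, by simp [IsProper], by simp [IsProper]⟩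
  | insert e S he ih =>
    obtain ⟨f, hfs, hft⟩ := ih
    obtain ⟨i, hi⟩ := exists_free_color S s f (s e) <| (card_lt_card (by
      refine (ssubset_iff_of_subset (filter_subset_filter _ (subset_univ S))).2 ⟨e, ?_, ?_⟩ <;>
        simp [he])).trans_le (hs (s e))
    obtain ⟨j, hj⟩ := exists_free_color S t f (t e) <| (card_lt_card (by
      refine (ssubset_iff_of_subset (filter_subset_filter _ (subset_univ S))).2 ⟨e, ?_, ?_⟩ <;>
        simp [he])).trans_le (ht (t e))
    by_cases hij : i = j
    · subst hij
      refine ⟨Function.update f e i, ?_, ?_⟩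
      · intro x hx y hy hr hxy
        unfold IsProper at hfs
        grind [Function.update_apply]
      · intro x hx y hy hr hxy
        unfold IsProper at hft
        grind [Function.update_apply]
    · obtain ⟨c, hc, hcs, hct⟩ :=
        exists_isBalanced (insert e (S.filter fun x => f x = i ∨ f x = j)) s t
      exact ⟨_, hfs.recolor hij (Or.inl ⟨rfl, rfl⟩) hi hc hcs,
        hft.recolor hij (Or.inr ⟨rfl, rfl⟩) hj hc hct⟩

end Coloring

/-! ### Balanced orientations -/

section Orientation

variable {V E : Type*} [Fintype V] [Fintype E] [DecidableEq V] [DecidableEq E]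

/-- Signs on the half-edges encode an orientation: each edge has one half of sign `1` (at its tail)
and one of sign `-1` (at its head). There is an orientation in which at most `⌈Δ(G)/2⌉` half-edges
of each sign are incident to any vertex. -/
theorem exists_orientation (G : Multigraph V E) :
    ∃ c : E × Bool → ℤ, (∀ h, c h = 1 ∨ c h = -1) ∧ (∀ e, c (e, true) ≠ c (e, false)) ∧
      ∀ v, ∀ ε : ℤ, (ε = 1 ∨ ε = -1) →
        (univ.filter fun h : E × Bool => c h = ε ∧ G.ends h.1 h.2 = v).card ≤
          (G.maxDegree + 1) / 2 := by
  obtain ⟨c, hc, hcs, hct⟩ :=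
    exists_isBalanced (univ : Finset (E × Bool)) Prod.fst fun h => G.ends h.1 h.2
  refine ⟨c, hc, fun e => ?_, fun v => ?_⟩
  · refine hcs.ne hc (mem_univ _) (mem_univ _) (by simp) rfl ?_
    rintro ⟨e', b⟩ - h
    cases b <;> simp_all
  · have hdeg : G.degree v ≤ G.maxDegree := le_sup (f := fun v => G.degree v) (mem_univ v)
    have hv := hct v
    have hsum : ∑ h : E × Bool, (if G.ends h.1 h.2 = v then c h else 0) =
        ((univ.filter fun h : E × Bool => c h = 1 ∧ G.ends h.1 h.2 = v).card : ℤ) -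
          (univ.filter fun h : E × Bool => c h = -1 ∧ G.ends h.1 h.2 = v).card := by
      rw [← sum_boole, ← sum_boole, ← sum_sub_distrib]
      refine sum_congr rfl fun h _ => ?_
      rcases hc h with hh | hh <;> simp only [hh] <;> split_ifs <;> simp_all
    have hadd : G.degree v =
        (univ.filter fun h : E × Bool => c h = 1 ∧ G.ends h.1 h.2 = v).card +
          (univ.filter fun h : E × Bool => c h = -1 ∧ G.ends h.1 h.2 = v).card := by
      rw [Multigraph.degree, ← card_union_of_disjoint]
      · congr 1
        ext h
        have := hc h
        simp only [mem_filter, mem_union, mem_univ, true_and]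
        tauto
      · rw [disjoint_left]
        intro h h1 h2
        simp only [mem_filter] at h1 h2
        omega
    rw [hsum, abs_le] at hv
    rintro ε (rfl | rfl) <;> omega

end Orientation

end LayerDecomposition

/-- **decomposition into layers.**
The edge set of any multigraph `G` can be decomposed into `⌈Δ(G)/2⌉` layers,
i.e. partitioned into `⌈Δ(G)/2⌉` classes each of which spans a subgraph of
maximum degree at most `2`. -/
theorem edge_decomposition_into_layers
    {V E : Type*} [Fintype V] [Fintype E] [DecidableEq V] [DecidableEq E]
    (G : Multigraph V E) :
    ∃ f : E → Fin ((G.maxDegree + 1) / 2),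
      ∀ i, ∀ v, G.degOn (Finset.univ.filter fun e => f e = i) v ≤ 2 := by
  classical
  obtain ⟨c, hc, hne, hcard⟩ := LayerDecomposition.exists_orientation G
  -- The half of each edge that carries a given sign, and its vertex (the tail or the head).
  have hhalf : ∀ ε : ℤ, (ε = 1 ∨ ε = -1) → ∀ e, ∃ b, c (e, b) = ε := by
    intro ε hε e
    have h1 := hc (e, true)
    have h2 := hc (e, false)
    have h3 := hne e
    by_cases h : c (e, true) = ε
    · exact ⟨true, h⟩
    · exact ⟨false, by omega⟩
  choose p hp using hhalf 1 (Or.inl rfl)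
  choose q hq using hhalf (-1) (Or.inr rfl)
  have hinj : ∀ e b b', c (e, b) = c (e, b') → b = b' := by
    intro e b b' h
    have h3 := hne e
    cases b <;> cases b' <;> simp_all
  have hfib : ∀ ε : ℤ, (ε = 1 ∨ ε = -1) → ∀ r : E → Bool, (∀ e, c (e, r e) = ε) →
      ∀ v, (Finset.univ.filter fun e => G.ends e (r e) = v).card ≤ (G.maxDegree + 1) / 2 := by
    intro ε hε r hr v
    refine le_trans (Finset.card_le_card_of_injOn (fun e => (e, r e)) ?_ ?_) (hcard v ε hε)
    · intro e he
      simpa [hr e] using he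
    · intro e _ e' _ h
      exact congrArg Prod.fst h
  obtain ⟨f, hf₁, hf₂⟩ := LayerDecomposition.exists_edge_coloring
    (fun e => G.ends e (p e)) (fun e => G.ends e (q e))
    (hfib 1 (Or.inl rfl) p hp) (hfib (-1) (Or.inr rfl) q hq)
  refine ⟨f, fun i v => ?_⟩
  have hone : ∀ (ε : ℤ) (r : E → Bool), (∀ e, c (e, r e) = ε) →
      LayerDecomposition.IsProper Finset.univ (fun e => G.ends e (r e)) f →
      (Finset.univ.filter fun h : E × Bool => c h = ε ∧ f h.1 = i ∧ G.ends h.1 h.2 = v).card ≤ 1 := by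
    intro ε r hr hf
    refine Finset.card_le_one.2 ?_
    rintro ⟨e, b⟩ he ⟨e', b'⟩ he'
    simp only [Finset.mem_filter, Finset.mem_univ, true_and] at he he'
    obtain rfl : b = r e := hinj e _ _ (he.1.trans (hr e).symm)
    obtain rfl : b' = r e' := hinj e' _ _ (he'.1.trans (hr e').symm)
    obtain rfl : e = e' := hf e (Finset.mem_univ _) e' (Finset.mem_univ _)
      (he.2.2.trans he'.2.2.symm) (he.2.1.trans he'.2.1.symm)
    rfl
  have h1 := hone 1 p hp hf₁
  have h2 := hone (-1) q hq hf₂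
  refine le_trans (le_trans (Finset.card_le_card ?_) (Finset.card_union_le _ _))
    (Nat.add_le_add h1 h2)
  intro h hh
  simp only [Finset.mem_filter, Finset.mem_univ, true_and, Finset.mem_union] at hh ⊢
  have := hc h
  tauto
end

section
/- Let c be an S^t_{2k}-coloring of a signed multigraph (G,σ) and let D be a connected component of a color class of c. Define c' by c'(e) = −c(e) for e ∈ D and c'(e) = c(e) otherwise. Then c' is an S^t_{2k}-coloring of (G,σ). -/
/-- Two edges are adjacent if they share an endpoint. -/
def Multigraph.EdgeAdj {V E : Type*} (G : Multigraph V E) (e₁ e₂ : E) : Prop :=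
  ∃ b₁ b₂, G.ends e₁ b₁ = G.ends e₂ b₂

/-- `D` is a connected component of the edge set `A`: `D ⊆ A`, any two edges
of `D` are joined by a walk through edges of `A`, and `D` is closed under
adjacency within `A`. -/
def Multigraph.IsComponentOf {V E : Type*} (G : Multigraph V E)
    (A D : Finset E) : Prop :=
  D ⊆ A ∧
    (∀ e₁ ∈ D, ∀ e₂ ∈ D,
      Relation.ReflTransGen (fun x y => x ∈ A ∧ y ∈ A ∧ G.EdgeAdj x y) e₁ e₂) ∧
    ∀ e₁ ∈ D, ∀ e₂ ∈ A, G.EdgeAdj e₁ e₂ → e₂ ∈ D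

theorem symNeg_injective {t k : ℕ} :
    Function.Injective (symNeg : SymColor t k → SymColor t k) :=
  Function.LeftInverse.injective symNeg_symNeg

theorem symNeg_mem_class {t k : ℕ} (x a : SymColor t k) :
    (symNeg x = a ∨ symNeg x = symNeg a) ↔ (x = a ∨ x = symNeg a) := by
  have h : symNeg x = a ↔ x = symNeg a := by
    rw [← symNeg_injective.eq_iff, symNeg_symNeg]
  rw [h, symNeg_injective.eq_iff, or_comm]

/-- A half-edge value lies in `{a, -a}` exactly when the color of its edge does, whatever the
bidirection. -/
theorem hval_mem_class {E : Type*} {t k : ℕ} (τ : E → Bool → ℤˣ) (c : E → SymColor t k)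
    (e : E) (b : Bool) (a : SymColor t k) :
    (hval τ c e b = a ∨ hval τ c e b = symNeg a) ↔ (c e = a ∨ c e = symNeg a) := by
  unfold hval
  split_ifs
  · rfl
  · exact symNeg_mem_class _ _

theorem hval_resign {E : Type*} [DecidableEq E] {t k : ℕ} (τ : E → Bool → ℤˣ)
    (c : E → SymColor t k) (D : Finset E) (e : E) (b : Bool) :
    hval τ (fun e => if e ∈ D then symNeg (c e) else c e) e b =
      if e ∈ D then symNeg (hval τ c e b) else hval τ c e b := by
  unfold hval
  by_cases h : e ∈ D <;> simp only [h, if_true, if_false] <;> split_ifs <;> rfl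

/-- If a negated value on `D` agreed with a value outside `D` at the same vertex, both edges would
lie in the color class of `a`; being adjacent, both would then lie in `D`. -/
theorem symNeg_hval_ne_of_mem_of_notMem {V E : Type*} [Fintype E] [DecidableEq E]
    (G : Multigraph V E) (τ : E → Bool → ℤˣ) {t k : ℕ} (c : E → SymColor t k)
    (a : SymColor t k) (D : Finset E)
    (hD : G.IsComponentOf
      (Finset.univ.filter fun e => c e = a ∨ c e = symNeg a) D)
    {e₁ e₂ : E} {b₁ b₂ : Bool} (h₁ : e₁ ∈ D) (h₂ : e₂ ∉ D)
    (hv : G.ends e₁ b₁ = G.ends e₂ b₂) :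
    symNeg (hval τ c e₁ b₁) ≠ hval τ c e₂ b₂ := by
  intro heq
  obtain ⟨hsub, -, hclosed⟩ := hD
  have hA : c e₁ = a ∨ c e₁ = symNeg a := (Finset.mem_filter.mp (hsub h₁)).2
  rw [← hval_mem_class τ c e₁ b₁ a, ← symNeg_mem_class, heq, hval_mem_class] at hA
  exact h₂ (hclosed e₁ h₁ e₂ (Finset.mem_filter.mpr ⟨Finset.mem_univ _, hA⟩) ⟨b₁, b₂, hv⟩)

/-- **resigning a color at a component.**
Let `c` be an `S^t_{2k}`-coloring of `(G, σ)` and `D` a connected component of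
the color class of a color `a` (the class being `c⁻¹({a, −a})`).  Replacing
`c(e)` by `−c(e)` on `D` again yields an `S^t_{2k}`-coloring of `(G, σ)`. -/
theorem resign_color_at_component_is_coloring
    {V E : Type*} [Fintype V] [Fintype E] [DecidableEq V] [DecidableEq E]
    (G : Multigraph V E) (τ : E → Bool → ℤˣ) {t k : ℕ}
    (c : E → SymColor t k) (hc : G.IsProperColoring τ c)
    (a : SymColor t k) (D : Finset E)
    (hD : G.IsComponentOf
      (Finset.univ.filter fun e => c e = a ∨ c e = symNeg a) D) :
    G.IsProperColoring τ (fun e => if e ∈ D then symNeg (c e) else c e) := by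
  intro e₁ b₁ e₂ b₂ hne hv
  rw [hval_resign, hval_resign]
  have hold := hc e₁ b₁ e₂ b₂ hne hv
  split_ifs with h₁ h₂ h₂
  · exact fun h => hold (symNeg_injective h)
  · exact symNeg_hval_ne_of_mem_of_notMem G τ c a D hD h₁ h₂ hv
  · exact (symNeg_hval_ne_of_mem_of_notMem G τ c a D hD h₂ h₁ hv.symm).symm
  · exact hold
end

section
/- Let c be an S^t_{2k}-coloring of a signed multigraph (G,σ) and let ±s be a pair of non-self-inverse colors. Then the subgraph induced by the color class c^{-1}({s,−s}) is a disjoint union of paths and balanced (positive) circuits. -/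
theorem hval_mem_pair {E : Type*} {t k : ℕ} (τ : E → Bool → ℤˣ) (c : E → SymColor t k)
    {s : SymColor t k} {e : E} (he : c e = s ∨ c e = symNeg s) (b : Bool) :
    hval τ c e b = s ∨ hval τ c e b = symNeg s := by
  unfold hval
  rcases he with he | he <;> rw [he] <;> split_ifs <;> simp [symNeg_symNeg]

/-- The sign of an edge of color `±s`, expressed by the values of its two half-edges alone. -/
theorem signOf_eq_hval {E : Type*} {t k : ℕ} (τ : E → Bool → ℤˣ) (c : E → SymColor t k)
    {s : SymColor t k} (hs : symNeg s ≠ s) {e : E} (he : c e = s ∨ c e = symNeg s) :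
    signOf τ e = -1 * ∏ b : Bool, (if hval τ c e b = symNeg s then (-1 : ℤˣ) else 1) := by
  unfold signOf hval
  rw [Fintype.prod_bool]
  rcases he with he | he <;> rw [he] <;>
    rcases Int.units_eq_one_or (τ e true) with h1 | h1 <;>
    rcases Int.units_eq_one_or (τ e false) with h2 | h2 <;>
    simp [h1, h2, symNeg_symNeg, hs.symm]

/-- At most one half-edge of each given value is incident with a given vertex. -/
theorem ends_injOn_hval {V E : Type*} (G : Multigraph V E) (τ : E → Bool → ℤˣ) {t k : ℕ}
    (c : E → SymColor t k) (hc : G.IsProperColoring τ c) (x : SymColor t k) :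
    Set.InjOn (fun h : E × Bool => G.ends h.1 h.2) {h | hval τ c h.1 h.2 = x} := by
  rintro ⟨e₁, b₁⟩ h₁ ⟨e₂, b₂⟩ h₂ h
  by_contra hne
  exact hc e₁ b₁ e₂ b₂ hne h (h₁.trans h₂.symm)

/-- In a `2`-regular subgraph of the color class of `±s`, exactly half of the half-edges have
value `-s`. -/
theorem card_hval_eq_symNeg {V E : Type*} [Fintype V] [Fintype E] [DecidableEq V] [DecidableEq E]
    (G : Multigraph V E) (τ : E → Bool → ℤˣ) {t k : ℕ}
    (c : E → SymColor t k) (hc : G.IsProperColoring τ c) (s : SymColor t k)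
    (C : Finset E) (hC : ∀ e ∈ C, c e = s ∨ c e = symNeg s)
    (hreg : ∀ v, G.IncidentOn C v → G.degOn C v = 2) :
    ((C ×ˢ (Finset.univ : Finset Bool)).filter fun h => hval τ c h.1 h.2 = symNeg s).card
      = C.card := by
  set H := C ×ˢ (Finset.univ : Finset Bool) with hH
  set W := H.image fun h => G.ends h.1 h.2 with hW
  have hHcard : H.card = C.card * 2 := by simp [hH]
  have hHW : H.card = W.card * 2 := by
    rw [Finset.card_eq_sum_card_image (fun h => G.ends h.1 h.2) H]
    refine Finset.sum_const_nat fun v hv => ?_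
    obtain ⟨h, hh, rfl⟩ := Finset.mem_image.1 hv
    rw [← hreg _ ⟨h.1, (Finset.mem_product.1 hh).1, h.2, rfl⟩]
    unfold Multigraph.degOn
    congr 1
    ext h'
    simp [hH]
  have hle : ∀ x, (H.filter fun h => hval τ c h.1 h.2 = x).card ≤ W.card := fun x =>
    Finset.card_le_card_of_injOn (fun h => G.ends h.1 h.2)
      (fun h hh => Finset.mem_image_of_mem _ (Finset.mem_filter.1 hh).1)
      ((ends_injOn_hval G τ c hc x).mono fun h hh => (Finset.mem_filter.1 hh).2)
  have hcover : H.card ≤ (H.filter fun h => hval τ c h.1 h.2 = s).card +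
      (H.filter fun h => hval τ c h.1 h.2 = symNeg s).card := by
    refine le_trans (Finset.card_le_card fun h hh => ?_) (Finset.card_union_le _ _)
    have := hval_mem_pair τ c (hC h.1 (Finset.mem_product.1 hh).1) h.2
    simpa [hh] using this
  have h1 := hle s
  have h2 := hle (symNeg s)
  omega

/-- In an `S^t_{2k}`-coloring of `(G, σ)`, the subgraph
induced by the color class `c⁻¹({s, −s})` of a pair of non-self-inverse
colors is a disjoint union of paths and balanced circuits: every vertex has
degree at most `2` in it, and every circuit contained in it is positive. -/
theorem nonSelfInverse_color_class_paths_and_balanced_circuits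
    {V E : Type*} [Fintype V] [Fintype E] [DecidableEq V] [DecidableEq E]
    (G : Multigraph V E) (τ : E → Bool → ℤˣ) {t k : ℕ}
    (c : E → SymColor t k) (hc : G.IsProperColoring τ c)
    (s : SymColor t k) (hs : symNeg s ≠ s) :
    (∀ v, G.degOn (Finset.univ.filter fun e => c e = s ∨ c e = symNeg s) v ≤ 2) ∧
      ∀ C : Finset E, (∀ e ∈ C, c e = s ∨ c e = symNeg s) → G.IsCircuit C →
        ∏ e ∈ C, signOf τ e = 1 := by
  refine ⟨fun v => ?_, fun C hC hcirc => ?_⟩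
  · refine le_trans (Finset.card_le_card_of_injOn (t := {s, symNeg s})
      (fun h : E × Bool => hval τ c h.1 h.2) ?_ ?_) Finset.card_le_two
    · intro h hh
      simp only [Finset.coe_filter, Finset.mem_filter, Finset.mem_univ, true_and,
        Set.mem_ofPred_eq] at hh
      simpa using hval_mem_pair τ c hh.1 h.2
    · intro h₁ hh₁ h₂ hh₂ h
      simp only [Finset.coe_filter, Finset.mem_univ, true_and, Set.mem_ofPred_eq] at hh₁ hh₂
      exact ends_injOn_hval G τ c hc _ h rfl (hh₁.2.trans hh₂.2.symm)
  · rw [Finset.prod_congr rfl fun e he => signOf_eq_hval τ c hs (hC e he),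
      Finset.prod_mul_distrib, ← Finset.prod_product', ← Finset.prod_filter,
      Finset.prod_const, Finset.prod_const,
      card_hval_eq_symNeg G τ c hc s C hC hcirc.2.1, ← mul_pow]
    simp
end

section
/- For every multigraph G, the chromatic index of the all-negative signed multigraph equals the ordinary chromatic index of G: χ'(G,−𝟏) = χ'(G). -/
/-- A proper edge-coloring of the multigraph `G` with `n` colors: any two
distinct half-edges incident with the same vertex lie on edges of distinct
colors (in particular a loop cannot be colored). -/
def Multigraph.IsProperEdgeColoring {V E : Type*} (G : Multigraph V E)
    {n : ℕ} (c : E → Fin n) : Prop :=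
  ∀ e₁ b₁ e₂ b₂, ((e₁, b₁) : E × Bool) ≠ (e₂, b₂) →
    G.ends e₁ b₁ = G.ends e₂ b₂ → c e₁ ≠ c e₂

/-- The ordinary chromatic index `χ'(G)` of a multigraph. -/
noncomputable def Multigraph.chromaticIndexUnsigned {V E : Type*}
    (G : Multigraph V E) : ℕ :=
  sInf {n : ℕ | ∃ c : E → Fin n, G.IsProperEdgeColoring c}

/-- A symmetric set `S^t_{2k}` has `2k + t` elements. -/
theorem card_symColor (t k : ℕ) : Fintype.card (SymColor t k) = Fintype.card (Fin (2 * k + t)) := by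
  simp; ring

theorem Multigraph.IsProperEdgeColoring.mono {V E : Type*} {G : Multigraph V E} {m n : ℕ}
    (h : m ≤ n) {c : E → Fin m} (hc : G.IsProperEdgeColoring c) :
    G.IsProperEdgeColoring (fun e => Fin.castLE h (c e)) :=
  fun e₁ b₁ e₂ b₂ hne hv heq => hc e₁ b₁ e₂ b₂ hne hv (Fin.castLE_injective h heq)

/-- In an all-negative signed multigraph both half-edges of an edge have the same value. -/
theorem hval_eq_of_neg {E : Type*} {t k : ℕ} {τ : E → Bool → ℤˣ}
    (hτ : ∀ e, (-1 : ℤˣ) = signOf τ e) (c : E → SymColor t k) (e : E) (b : Bool) :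
    hval τ c e b = hval τ c e true := by
  have h : τ e true = τ e false := by
    have h1 : τ e true * τ e false = 1 := (neg_injective (hτ e)).symm
    rw [mul_eq_one_iff_eq_inv.mp h1, Int.units_inv_eq_self]
  cases b <;> simp [hval, h]

theorem Multigraph.hasColoring_neg_one_iff {V E : Type*} (G : Multigraph V E) (t k : ℕ) :
    G.HasColoring (fun _ => -1) t k ↔ ∃ c : E → Fin (2 * k + t), G.IsProperEdgeColoring c := by
  let φ : SymColor t k ≃ Fin (2 * k + t) := Fintype.equivOfCardEq (card_symColor t k)
  constructor
  · rintro ⟨τ, hτ, c, hc⟩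
    refine ⟨fun e => φ (hval τ c e true), fun e₁ b₁ e₂ b₂ hne hv heq => hc e₁ b₁ e₂ b₂ hne hv ?_⟩
    rw [hval_eq_of_neg hτ, hval_eq_of_neg hτ c e₂ b₂]
    exact φ.injective heq
  · rintro ⟨c, hc⟩
    refine ⟨fun _ _ => 1, fun e => by simp [signOf], fun e => φ.symm (c e), ?_⟩
    intro e₁ b₁ e₂ b₂ hne hv heq
    exact hc e₁ b₁ e₂ b₂ hne hv (φ.symm.injective (by simpa [hval] using heq))

/-- For an upward closed set of naturals, the least element is the smaller of the least even and
the least odd element. The convention `sInf ∅ = 0` does no harm: a nonempty upward closed set has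
elements of both parities. -/
theorem min_sInf_even_odd {P : ℕ → Prop} (hP : ∀ m n, m ≤ n → P m → P n) :
    min (sInf {n | ∃ k, n = 2 * k + 0 ∧ P (2 * k + 0)})
      (sInf {n | ∃ k, n = 2 * k + 1 ∧ P (2 * k + 1)}) = sInf {n | P n} := by
  rcases Set.eq_empty_or_nonempty {n | P n} with h | h
  · have hn : ∀ n, ¬ P n := fun n hn => Set.eq_empty_iff_forall_notMem.mp h n hn
    simp [hn]
  · have hm : P (sInf {n | P n}) := Nat.sInf_mem h
    set m := sInf {n | P n} with hm_def
    -- Each parity class contains `2 * m` or `2 * m + 1`, so neither infimum is a junk value.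
    have key : ∀ i, i ≤ 1 → m ≤ sInf {n | ∃ k, n = 2 * k + i ∧ P (2 * k + i)} := by
      intro i hi
      have hne : {n | ∃ k, n = 2 * k + i ∧ P (2 * k + i)}.Nonempty :=
        ⟨_, m, rfl, hP m _ (by omega) hm⟩
      obtain ⟨k, hk, hPk⟩ := Nat.sInf_mem hne
      rw [hk]
      exact Nat.sInf_le hPk
    refine le_antisymm ?_ (le_min (key 0 (by omega)) (key 1 le_rfl))
    rcases Nat.even_or_odd' m with ⟨k, hk | hk⟩
    · exact (min_le_left _ _).trans (Nat.sInf_le ⟨k, hk, by rw [add_zero, ← hk]; exact hm⟩)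
    · exact (min_le_right _ _).trans (Nat.sInf_le ⟨k, hk, by rw [← hk]; exact hm⟩)

/-- For every multigraph `G`, the chromatic index of the
all-negative signed multigraph equals the ordinary chromatic index:
`χ'(G, −𝟏) = χ'(G)`. -/
theorem chromaticIndex_all_negative_eq_unsigned
    {V E : Type*} [Fintype V] [Fintype E] [DecidableEq V] [DecidableEq E]
    (G : Multigraph V E) :
    G.chromaticIndex (fun _ => -1) = G.chromaticIndexUnsigned := by
  simp only [Multigraph.chromaticIndex, Multigraph.chiSub, Multigraph.hasColoring_neg_one_iff,
    Multigraph.chromaticIndexUnsigned]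
  exact min_sInf_even_odd (P := fun n => ∃ c : E → Fin n, G.IsProperEdgeColoring c)
    fun _ _ h ⟨_, hc⟩ => ⟨_, hc.mono h⟩
end
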